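/- There exist absolute constants c > 0 and C > 0 such that for every real ε with 0 < ε < 1 and all sufficiently large integers n, there is a projection games instance (L, R, E_Proj, Σ, {π_{i,j}}) with the following properties: (1) |R| = n, |L| = m := ⌈n^{1+ε}⌉, and |Σ| = (K+1)³ where K is as in (4); (2) there is a feasible solution y* to SDP_Proj^r with r = ⌈n^{c·ε}⌉ such that ∑_{(σL,σR)∈π_{i,j}} y*_{{(c_i,σL),(x_j,σR)}} = 1 for every edge {c_i,x_j} ∈ E_Proj; (3) every assignment α : L∪R → Σ satisfies at most C·n^{1+ε}·(ln n)/ε edges of E_Proj; (4) every vertex of L has degree exactly K in E_Proj, where (1/2)·n^{(1−ε)/5} ≤ K ≤ n^{(1−ε)/5}, and every vertex of R has degree at most 2·K·n^{ε}. -/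

import Mathlib

open Finset

/-- A set of (vertex, label) pairs is *inconsistent* if it assigns two different labels to the
same vertex. -/
def Inconsistent {W Sg : Type*} (Ψ : Finset (W × Sg)) : Prop :=
  ∃ v σ σ', σ ≠ σ' ∧ (v, σ) ∈ Ψ ∧ (v, σ') ∈ Ψ

/-- Feasibility for the level-`r` Lasserre SDP for projection games (`SDP_Proj^r`) on the
vertex set `W` (`= L ⊕ R`) with alphabet `Sg`: `y ∅ = 1`, the moment matrix
`(y_{Ψ₁ ∪ Ψ₂})_{|Ψ₁|,|Ψ₂| ≤ r}` is positive semidefinite, and for every vertex `v` and all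
`Ψ₁, Ψ₂` with `|Ψ₁|, |Ψ₂| ≤ r` one has `∑_{σ} y_{Ψ₁∪Ψ₂∪{(v,σ)}} = y_{Ψ₁∪Ψ₂}`. -/
def ProjFeasible {W Sg : Type*} [Fintype W] [Fintype Sg] [DecidableEq W] [DecidableEq Sg]
    (r : ℕ) (y : Finset (W × Sg) → ℝ) : Prop :=
  y ∅ = 1 ∧
  (Matrix.of fun Ψ₁ Ψ₂ : {S : Finset (W × Sg) // S.card ≤ r} => y (Ψ₁.1 ∪ Ψ₂.1)).PosSemidef ∧
  ∀ (v : W) (Ψ₁ Ψ₂ : Finset (W × Sg)), Ψ₁.card ≤ r → Ψ₂.card ≤ r →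
    ∑ σ : Sg, y ((Ψ₁ ∪ Ψ₂) ∪ {(v, σ)}) = y (Ψ₁ ∪ Ψ₂)

/-!
The instance comes from a random system of linear equations over `ZMod q`, where `q = K + 1` is prime
and `K` lies between `n ^ ((1 - ε) / 5) / 2` and `n ^ ((1 - ε) / 5)` (Bertrand's postulate). A left
vertex `i` carries an unknown `z i` in `(ZMod q)³`, a right vertex `j` an unknown scalar `x j`, and the
edge from `i` to its `a`-th neighbour `f i a` stands for the equation `⟨z i, g a⟩ + b (i, a) = x (f i a)`
with `g a = (1, a, a²)`. It is a projection, since `z i` determines `x (f i a)`.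

*Soundness.* For random shifts `b` a fixed assignment satisfies about a `1 / q` fraction of the `n * K`
equations, and an exponential moment bound survives the union over all assignments up to
`O(n log q)` satisfied equations (`exists_shift`).

*Completeness.* The graph `f` is random, so that any set of edges on `t ≤ n ^ (1 / 100)` left vertices
reaches all but `9 t / 5` as many right vertices as it has edges (`exists_graph`). The code generated
by the `g a` is Reed–Solomon, so its dual distance is four (`dualDist_rs`). In a combination of
equations, a left vertex whose unknowns cancel therefore uses at least four edges, and a right vertex
whose unknown cancels at least two; against expansion this shows that a combination using `t` left
vertices leaves at least `t / 10` vertices uncancelled (`card_lsupp_le`). Hence the combinations on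
few left vertices have distinct linear parts, and are closed under those compositions that occur
between forms on at most `r` vertices. Their characters sum to a pseudo-density (`pden`) whose moment
matrix on such forms is a Hermitian kernel which is multiplicative along its own support, and such
kernels are positive semidefinite (`cocycle_psd`, `pden_psd`). This yields the Lasserre solution
(`lasY_feasible`), under which every equation holds with pseudo-probability one (`lasY_edge`).

*Size.* The system has only `n` left vertices. Each is then repeated about `n ^ ε` times
(`exists_instance`): copies share their unknowns in the Lasserre solution, and soundness is
applied separately to each block of `n` consecutive left vertices. Keeping the base graph this sparse makes
the expansion argument uniform in `ε`, up to `ε = 1`.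
-/

/-! ### Positive semidefinite kernels and characters -/

/-- A Hermitian kernel which is multiplicative along its own support, and normalised on the
diagonal, is positive semidefinite: non-vanishing is an equivalence relation, and on each class the
kernel has rank one. The proof writes the kernel as a Gram kernel, dividing by the class sizes. -/
lemma cocycle_psd {α : Type*} (U : Finset α) (m : α → α → ℂ)
    (hrefl : ∀ u ∈ U, m u u = 1)
    (hconj : ∀ u ∈ U, ∀ v ∈ U, m v u = (starRingEnd ℂ) (m u v))
    (htrans : ∀ u ∈ U, ∀ v ∈ U, ∀ w ∈ U, m u v ≠ 0 → m v w ≠ 0 → m u w = m u v * m v w)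
    (a : α → ℂ) :
    0 ≤ (∑ u ∈ U, ∑ w ∈ U, a u * (starRingEnd ℂ) (a w) * m u w).re := by
  classical
  set N : α → ℝ := fun v => ((U.filter fun w => m v w ≠ 0).card : ℝ) with hN
  have hsymm : ∀ u ∈ U, ∀ v ∈ U, m u v ≠ 0 → m v u ≠ 0 := by
    intro u hu v hv h
    rw [hconj u hu v hv]
    simpa using h
  have key : ∀ u ∈ U, ∀ w ∈ U, m u w = ∑ v ∈ U, ((N v)⁻¹ : ℂ) * (m u v * m v w) := by
    intro u hu w hw
    by_cases h : m u w = 0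
    · rw [h, eq_comm]
      refine Finset.sum_eq_zero fun v hv => ?_
      by_cases h1 : m u v = 0
      · simp [h1]
      by_cases h2 : m v w = 0
      · simp [h2]
      have := htrans u hu v hv w hw h1 h2
      rw [← this, h, mul_zero]
    · have h1 : ∀ v ∈ U, ((N v)⁻¹ : ℂ) * (m u v * m v w)
          = if m u v ≠ 0 then ((N u)⁻¹ : ℂ) * m u w else 0 := by
        intro v hv
        split_ifs with h1
        · have hvu := hsymm u hu v hv h1
          have hvw : m v w ≠ 0 := by
            rw [htrans v hv u hu w hw hvu h]
            exact mul_ne_zero hvu h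
          rw [← htrans u hu v hv w hw h1 hvw]
          have : N v = N u := by
            simp only [hN]
            congr 2
            apply Finset.filter_congr
            intro z hz
            constructor
            · intro hvz
              rw [htrans u hu v hv z hz h1 hvz]
              exact mul_ne_zero h1 hvz
            · intro huz
              rw [htrans v hv u hu z hz hvu huz]
              exact mul_ne_zero hvu huz
          rw [this]
        · push Not at h1
          simp [h1]
      rw [Finset.sum_congr rfl h1, ← Finset.sum_filter, Finset.sum_const, nsmul_eq_mul]
      have hNu : ((U.filter fun v => m u v ≠ 0).card : ℂ) ≠ 0 := by
        rw [Nat.cast_ne_zero]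
        apply Finset.card_ne_zero_of_mem (a := u)
        simp [hu, hrefl u hu]
      simp only [hN]
      push_cast
      field_simp
  have : (∑ u ∈ U, ∑ w ∈ U, a u * (starRingEnd ℂ) (a w) * m u w)
      = ∑ v ∈ U, (((N v)⁻¹ * Complex.normSq (∑ u ∈ U, a u * m u v) : ℝ) : ℂ) := by
    have h1 : ∀ v ∈ U, (((N v)⁻¹ * Complex.normSq (∑ u ∈ U, a u * m u v) : ℝ) : ℂ)
        = ∑ u ∈ U, ∑ w ∈ U, a u * (starRingEnd ℂ) (a w) * (((N v)⁻¹ : ℂ) * (m u v * m v w)) := by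
      intro v hv
      push_cast
      rw [Complex.normSq_eq_conj_mul_self, mul_comm ((starRingEnd ℂ) _), map_sum,
        Finset.sum_mul_sum, Finset.mul_sum]
      refine Finset.sum_congr rfl fun u hu => ?_
      rw [Finset.mul_sum]
      refine Finset.sum_congr rfl fun w hw => ?_
      rw [map_mul, ← hconj w hw v hv]
      ring
    rw [Finset.sum_congr rfl h1, eq_comm, Finset.sum_comm]
    refine Finset.sum_congr rfl fun u hu => ?_
    rw [Finset.sum_comm]
    refine Finset.sum_congr rfl fun w hw => ?_
    rw [← Finset.mul_sum, ← key u hu w hw]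
  rw [this, ← Complex.ofReal_sum, Complex.ofReal_re]
  refine Finset.sum_nonneg fun v _ => mul_nonneg (inv_nonneg.2 (Nat.cast_nonneg _))
    (Complex.normSq_nonneg _)

lemma addChar_sum {A M ι : Type*} [AddCommMonoid A] [CommMonoid M] (ψ : AddChar A M)
    (s : Finset ι) (f : ι → A) : ψ (∑ i ∈ s, f i) = ∏ i ∈ s, ψ (f i) := by
  classical
  induction s using Finset.induction_on with
  | empty => simp
  | insert a s ha ih => rw [Finset.sum_insert ha, Finset.prod_insert ha, AddChar.map_add_eq_mul, ih]

/-- Orthogonality of the additive characters of `(ZMod q)^D`. -/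
lemma sum_char {q : ℕ} [Fact q.Prime] {D : Type*} [Fintype D] [DecidableEq D] (u : D → ZMod q) :
    ∑ x : D → ZMod q, (ZMod.stdAddChar (u ⬝ᵥ x) : ℂ)
      = if u = 0 then (Fintype.card (D → ZMod q) : ℂ) else 0 := by
  have h1 : ∀ x : D → ZMod q, (ZMod.stdAddChar (u ⬝ᵥ x) : ℂ)
      = ∏ d, (ZMod.stdAddChar (x d * u d) : ℂ) := by
    intro x
    rw [dotProduct, addChar_sum]
    simp [mul_comm]
  simp_rw [h1]
  rw [← Fintype.piFinset_univ, ← Finset.prod_univ_sum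
    (f := fun d (t : ZMod q) => (ZMod.stdAddChar (t * u d) : ℂ))]
  simp_rw [AddChar.sum_mulShift _ (ZMod.isPrimitive_stdAddChar q)]
  split_ifs with h
  · subst h
    simp [ZMod.card]
  · obtain ⟨d, hd⟩ := Function.ne_iff.1 h
    exact Finset.prod_eq_zero (Finset.mem_univ d) (by rw [if_neg (by simpa using hd), Nat.cast_zero])

/-! ### Pseudo-densities of affine systems -/

/-- The pseudo-density attached to an affine system over `ZMod q`. A vector `l : E → ZMod q` encodes
a linear combination of the equations; `dl l ⬝ᵥ x + b ⬝ᵥ l` is the value at `x` of the resulting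
affine form, which vanishes at a genuine solution. Summing the characters of these forms over all
`l` would give a multiple of the indicator of the solution set; here only the combinations in `Λ`
are used. -/
noncomputable def pden {q : ℕ} [Fact q.Prime] {D E : Type*} [Fintype D] [Fintype E]
    (dl : (E → ZMod q) →ₗ[ZMod q] (D → ZMod q)) (b : E → ZMod q) (Λ : Finset (E → ZMod q))
    (x : D → ZMod q) : ℂ :=
  ∑ l ∈ Λ, (ZMod.stdAddChar (dl l ⬝ᵥ x + b ⬝ᵥ l) : ℂ)

section pden

variable {q : ℕ} [Fact q.Prime] {D E : Type*} [Fintype D] [Fintype E]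
  (dl : (E → ZMod q) →ₗ[ZMod q] (D → ZMod q)) (b : E → ZMod q) (Λ : Finset (E → ZMod q))

variable [DecidableEq D]

/-- If distinct combinations in `Λ` have distinct linear parts, then the pseudo-expectation of the
character of `l₀` is `1` as soon as `-l₀ ∈ Λ`. -/
lemma sum_char_mul_pden
    (hinj : ∀ l ∈ Λ, ∀ l' ∈ Λ, dl l = dl l' → l = l') (l₀ : E → ZMod q) (hl₀ : -l₀ ∈ Λ) :
    ∑ x : D → ZMod q, (ZMod.stdAddChar (dl l₀ ⬝ᵥ x + b ⬝ᵥ l₀) : ℂ) * pden dl b Λ x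
      = (Fintype.card (D → ZMod q) : ℂ) := by
  classical
  simp_rw [pden, Finset.mul_sum]
  rw [Finset.sum_comm, Finset.sum_eq_single_of_mem (-l₀) hl₀]
  · have h1 : ∀ x : D → ZMod q, dl l₀ ⬝ᵥ x + b ⬝ᵥ l₀ + (dl (-l₀) ⬝ᵥ x + b ⬝ᵥ (-l₀)) = 0 := by
      intro x
      simp only [map_neg, neg_dotProduct, dotProduct_neg]
      ring
    simp_rw [← AddChar.map_add_eq_mul, h1]
    simp
  · intro l hl hne
    have h1 : ∀ x : D → ZMod q, (ZMod.stdAddChar (dl l₀ ⬝ᵥ x + b ⬝ᵥ l₀) : ℂ) *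
        ZMod.stdAddChar (dl l ⬝ᵥ x + b ⬝ᵥ l)
        = ZMod.stdAddChar (b ⬝ᵥ (l₀ + l)) * ZMod.stdAddChar (dl (l₀ + l) ⬝ᵥ x) := by
      intro x
      rw [← AddChar.map_add_eq_mul, ← AddChar.map_add_eq_mul]
      congr 1
      simp [add_dotProduct, dotProduct_add]
      ring
    simp_rw [h1]
    rw [← Finset.mul_sum, sum_char, if_neg, mul_zero]
    intro h0
    apply hne
    apply hinj l hl _ hl₀
    rw [map_add] at h0
    rw [map_neg]
    exact eq_neg_of_add_eq_zero_right h0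

/-- The pseudo-expectation is nonnegative on squared moduli of combinations of the characters in
`U`, provided `Λ` is closed under composing derivations between members of `U`. -/
lemma pden_psd (hzero : (0 : E → ZMod q) ∈ Λ) (hneg : ∀ l ∈ Λ, -l ∈ Λ)
    (hinj : ∀ l ∈ Λ, ∀ l' ∈ Λ, dl l = dl l' → l = l') (U : Finset (D → ZMod q))
    (htrans : ∀ u ∈ U, ∀ v ∈ U, ∀ w ∈ U, ∀ l ∈ Λ, ∀ l' ∈ Λ, dl l = v - u → dl l' = w - v →
      l + l' ∈ Λ) (a : (D → ZMod q) → ℂ) :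
    0 ≤ (∑ x : D → ZMod q, (∑ u ∈ U, a u * (ZMod.stdAddChar (u ⬝ᵥ x) : ℂ)) *
      (starRingEnd ℂ) (∑ u ∈ U, a u * (ZMod.stdAddChar (u ⬝ᵥ x) : ℂ)) * pden dl b Λ x).re := by
  classical
  set m : (D → ZMod q) → (D → ZMod q) → ℂ :=
    fun u v => ∑ l ∈ Λ with dl l = v - u, (ZMod.stdAddChar (b ⬝ᵥ l) : ℂ) with hm
  have hval : ∀ u v, ∀ l ∈ Λ, dl l = v - u → m u v = ZMod.stdAddChar (b ⬝ᵥ l) := by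
    intro u v l hl h
    have : Λ.filter (fun l => dl l = v - u) = {l} := by
      ext l'
      simp only [Finset.mem_filter, Finset.mem_singleton]
      constructor
      · rintro ⟨h1, h2⟩
        exact hinj l' h1 l hl (h2.trans h.symm)
      · rintro rfl
        exact ⟨hl, h⟩
    rw [hm]
    simp only
    rw [this, Finset.sum_singleton]
  have hex : ∀ u v, m u v ≠ 0 → ∃ l ∈ Λ, dl l = v - u := by
    intro u v h
    obtain ⟨l, hl, -⟩ := Finset.exists_ne_zero_of_sum_ne_zero h
    exact ⟨l, (Finset.mem_filter.1 hl).1, (Finset.mem_filter.1 hl).2⟩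
  have hpos := cocycle_psd U m
    (by
      intro u _
      rw [hval u u 0 hzero (by simp)]
      simp)
    (by
      intro u _ v _
      rw [hm]
      simp only
      rw [map_sum]
      refine Finset.sum_nbij' (fun l => -l) (fun l => -l) ?_ ?_ (by simp) (by simp) ?_
      · intro l hl
        rw [Finset.mem_filter] at hl ⊢
        refine ⟨hneg l hl.1, ?_⟩
        rw [map_neg, hl.2, neg_sub]
      · intro l hl
        rw [Finset.mem_filter] at hl ⊢
        refine ⟨hneg l hl.1, ?_⟩
        rw [map_neg, hl.2, neg_sub]
      · intro l _
        rw [← AddChar.map_neg_eq_conj]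
        simp [dotProduct_neg])
    (by
      intro u hu v hv w hw h1 h2
      obtain ⟨l, hl, hl'⟩ := hex u v h1
      obtain ⟨k, hk, hk'⟩ := hex v w h2
      rw [hval u v l hl hl', hval v w k hk hk',
        hval u w (l + k) (htrans u hu v hv w hw l hl k hk hl' hk') (by rw [map_add, hl', hk']; abel),
        ← AddChar.map_add_eq_mul, dotProduct_add])
    a
  have hmom : ∀ u v : D → ZMod q, ∑ x : D → ZMod q, (ZMod.stdAddChar (u ⬝ᵥ x) : ℂ) *
      (starRingEnd ℂ) (ZMod.stdAddChar (v ⬝ᵥ x) : ℂ) * pden dl b Λ x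
      = (Fintype.card (D → ZMod q) : ℂ) * m u v := by
    intro u v
    simp_rw [pden, Finset.mul_sum]
    rw [Finset.sum_comm, hm]
    simp only
    rw [Finset.sum_filter, Finset.mul_sum]
    refine Finset.sum_congr rfl fun l _ => ?_
    have h1 : ∀ x : D → ZMod q, (ZMod.stdAddChar (u ⬝ᵥ x) : ℂ) *
      (starRingEnd ℂ) (ZMod.stdAddChar (v ⬝ᵥ x) : ℂ) * ZMod.stdAddChar (dl l ⬝ᵥ x + b ⬝ᵥ l)
        = ZMod.stdAddChar (b ⬝ᵥ l) * ZMod.stdAddChar ((u - v + dl l) ⬝ᵥ x) := by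
      intro x
      rw [← AddChar.map_neg_eq_conj, ← AddChar.map_add_eq_mul, ← AddChar.map_add_eq_mul,
        ← AddChar.map_add_eq_mul]
      congr 1
      simp [add_dotProduct, sub_dotProduct]
      ring
    simp_rw [h1]
    rw [← Finset.mul_sum, sum_char]
    have h2 : u - v + dl l = 0 ↔ dl l = v - u := by
      constructor
      · intro h
        rw [eq_neg_of_add_eq_zero_right h, neg_sub]
      · intro h
        rw [h]
        abel
    simp_rw [h2]
    split_ifs
    · ring
    · simp
  have hexp : (∑ x : D → ZMod q, (∑ u ∈ U, a u * (ZMod.stdAddChar (u ⬝ᵥ x) : ℂ)) *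
      (starRingEnd ℂ) (∑ u ∈ U, a u * (ZMod.stdAddChar (u ⬝ᵥ x) : ℂ)) * pden dl b Λ x)
      = ((Fintype.card (D → ZMod q) : ℝ) : ℂ) *
        ∑ u ∈ U, ∑ w ∈ U, a u * (starRingEnd ℂ) (a w) * m u w := by
    simp_rw [map_sum, Finset.sum_mul_sum, Finset.sum_mul]
    rw [Finset.sum_comm, Finset.mul_sum]
    refine Finset.sum_congr rfl fun u _ => ?_
    rw [Finset.sum_comm, Finset.mul_sum]
    refine Finset.sum_congr rfl fun w _ => ?_
    have := hmom u w
    rw [Complex.ofReal_natCast, mul_left_comm, ← this, Finset.mul_sum]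
    refine Finset.sum_congr rfl fun x _ => ?_
    rw [map_mul]
    ring
  rw [hexp, Complex.re_ofReal_mul]
  exact mul_nonneg (Nat.cast_nonneg _) hpos

end pden

/-! ### The linear system of a bipartite graph -/

section system

variable {q : ℕ} [Fact q.Prime] {ι κ ρ : Type*}

/-- The linear part of a combination `l` of edge equations. The unknowns are a vector
`z i ∈ (ZMod q)³` for each left vertex `i` and a scalar `x j` for each right vertex `j`; the
equation of the edge `(i, a)` is `⟨z i, g a⟩ + b (i, a) = x (f i a)`. -/
def dlin [Fintype ι] [Fintype κ] [DecidableEq ρ] (f : ι → κ → ρ) (g : κ → Fin 3 → ZMod q) :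
    (ι × κ → ZMod q) →ₗ[ZMod q] ((ι × Fin 3) ⊕ ρ → ZMod q) where
  toFun l := Sum.elim (fun p => ∑ a, l (p.1, a) * g a p.2)
    (fun j => -∑ e : ι × κ, if f e.1 e.2 = j then l e else 0)
  map_add' l l' := by
    ext (p | j)
    · simp [add_mul, Finset.sum_add_distrib]
    · simp only [Sum.elim_inr, Pi.add_apply]
      rw [← neg_add, ← Finset.sum_add_distrib]
      congr 1
      refine Finset.sum_congr rfl fun e _ => ?_
      split_ifs <;> simp
  map_smul' c l := by
    ext (p | j)
    · simp [mul_assoc, Finset.mul_sum]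
    · simp [Finset.mul_sum]

/-- The vertex to which an unknown belongs. -/
def vert : (ι × Fin 3) ⊕ ρ → ι ⊕ ρ := Sum.map Prod.fst id

variable [Fintype ι] [DecidableEq ι] [Fintype κ] [Fintype ρ] [DecidableEq ρ]

/-- The set of vertices one of whose unknowns occurs in the linear form `u`. -/
def vsupp (u : (ι × Fin 3) ⊕ ρ → ZMod q) : Finset (ι ⊕ ρ) :=
  (univ.filter fun d => u d ≠ 0).image vert

/-- The set of left vertices one of whose edges occurs in the combination `l`. -/
def lsupp (l : ι × κ → ZMod q) : Finset ι := (univ.filter fun e => l e ≠ 0).image Prod.fst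

lemma vsupp_sub (u v : (ι × Fin 3) ⊕ ρ → ZMod q) : #(vsupp (u - v)) ≤ #(vsupp u) + #(vsupp v) := by
  refine (Finset.card_le_card ?_).trans (Finset.card_union_le _ _)
  rw [vsupp, vsupp, vsupp, ← Finset.image_union]
  apply Finset.image_subset_image
  intro d
  simp only [Finset.mem_filter, Finset.mem_univ, true_and, Finset.mem_union, Pi.sub_apply]
  contrapose!
  rintro ⟨h1, h2⟩
  simp [h1, h2]

lemma lsupp_add [DecidableEq κ] (l l' : ι × κ → ZMod q) :
    #(lsupp (l + l')) ≤ #(lsupp l) + #(lsupp l') := by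
  refine (Finset.card_le_card ?_).trans (Finset.card_union_le _ _)
  rw [lsupp, lsupp, lsupp, ← Finset.image_union]
  apply Finset.image_subset_image
  intro d
  simp only [Finset.mem_filter, Finset.mem_univ, true_and, Finset.mem_union, Pi.add_apply]
  contrapose!
  rintro ⟨h1, h2⟩
  simp [h1, h2]

lemma lsupp_neg (l : ι × κ → ZMod q) : lsupp (-l) = lsupp l := by
  simp [lsupp]

lemma lsupp_eq_empty {l : ι × κ → ZMod q} (h : #(lsupp l) = 0) : l = 0 := by
  rw [Finset.card_eq_zero, lsupp, Finset.image_eq_empty] at h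
  ext e
  by_contra he
  have : e ∈ (univ.filter fun e => l e ≠ 0) := by simpa using he
  rw [h] at this
  simp at this

/-- Small-set expansion: any `E'` edges touching `t ≤ S` left vertices reach at least
`|E'| - 9t/5` right vertices. -/
def Expands (f : ι → κ → ρ) (S : ℕ) : Prop :=
  ∀ E' : Finset (ι × κ), #(E'.image Prod.fst) ≤ S →
    5 * #E' ≤ 5 * #(E'.image fun e => f e.1 e.2) + 9 * #(E'.image Prod.fst)

/-- Vectors in the dual code of the code generated by `g` have weight at least four. -/
def DualDist (g : κ → Fin 3 → ZMod q) : Prop :=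
  ∀ ν : κ → ZMod q, (∀ k, ∑ a, ν a * g a k = 0) → ν ≠ 0 → 4 ≤ #(univ.filter fun a => ν a ≠ 0)

/-- Expansion bounds the number of left vertices used in a derivation by the number of vertices in
the derived form: a used left vertex absent from the derived form contributes at least four edges,
while a used right vertex absent from the derived form is hit at least twice. -/
lemma card_lsupp_le {f : ι → κ → ρ} {g : κ → Fin 3 → ZMod q} {S : ℕ} (hf : Expands f S)
    (hg : DualDist g) (l : ι × κ → ZMod q) (hl : #(lsupp l) ≤ S) :
    #(lsupp l) ≤ 10 * #(vsupp (dlin f g l)) := by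
  set E' := univ.filter fun e => l e ≠ 0 with hE'
  set T := E'.image Prod.fst with hT
  have hTl : lsupp l = T := rfl
  set J := E'.image (fun e => f e.1 e.2) with hJ
  set V := vsupp (dlin f g l) with hV
  set A := T.filter (fun i => Sum.inl i ∈ V) with hA
  set B := J.filter (fun j => Sum.inr j ∈ V) with hB
  have hAB : #A + #B ≤ #V := by
    rw [← Finset.card_disjSum]
    apply Finset.card_le_card
    rintro (i | j) h
    · exact (Finset.mem_filter.1 (Finset.inl_mem_disjSum.1 h)).2
    · exact (Finset.mem_filter.1 (Finset.inr_mem_disjSum.1 h)).2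
  have hexp : 5 * #E' ≤ 5 * #J + 9 * #T := hf E' hl
  have hleft : 4 * #T ≤ #E' + 4 * #A := by
    rw [Finset.card_eq_sum_card_image Prod.fst E', ← hT, hA, Finset.card_filter, Finset.mul_sum,
      ← Finset.sum_add_distrib, mul_comm, ← smul_eq_mul, ← Finset.sum_const]
    refine Finset.sum_le_sum fun i hi => ?_
    split_ifs with hiV
    · omega
    · have hdual := hg (fun a => l (i, a)) ?_ ?_
      · refine (hdual.trans ?_).trans (Nat.le_add_right _ _)
        refine Finset.card_le_card_of_injOn (fun a => (i, a)) ?_ ?_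
        · intro a ha
          simp only [Finset.coe_filter, Finset.mem_univ, true_and, Set.mem_ofPred_eq] at ha
          simp [hE', ha]
        · intro a _ a' _ h
          exact (Prod.ext_iff.1 h).2
      · intro k
        by_contra hne
        apply hiV
        rw [hV, vsupp, Finset.mem_image]
        exact ⟨Sum.inl (i, k), Finset.mem_filter.2 ⟨Finset.mem_univ _, hne⟩, rfl⟩
      · intro h0
        rw [hT, Finset.mem_image] at hi
        obtain ⟨⟨i', a⟩, he, rfl⟩ := hi
        simp only [hE', Finset.mem_filter, Finset.mem_univ, true_and] at he
        exact he (congrFun h0 a)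
  have hright : 2 * #J ≤ #E' + #B := by
    rw [Finset.card_eq_sum_card_image (fun e => f e.1 e.2) E', ← hJ, hB, Finset.card_filter,
      ← Finset.sum_add_distrib, mul_comm, ← smul_eq_mul, ← Finset.sum_const]
    refine Finset.sum_le_sum fun j hj => ?_
    have hpos : 0 < #(E'.filter fun e => f e.1 e.2 = j) := by
      rw [Finset.card_pos]
      obtain ⟨e, he, hej⟩ := Finset.mem_image.1 hj
      exact ⟨e, Finset.mem_filter.2 ⟨he, hej⟩⟩
    split_ifs with hjV
    · omega
    · by_contra hlt
      have hone : #(E'.filter fun e => f e.1 e.2 = j) = 1 := by omega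
      obtain ⟨e, he⟩ := Finset.card_eq_one.1 hone
      apply hjV
      rw [hV, vsupp, Finset.mem_image]
      refine ⟨Sum.inr j, ?_, rfl⟩
      have he' : e ∈ E' := (Finset.mem_filter.1 (he ▸ Finset.mem_singleton_self e)).1
      have hsum : (∑ e : ι × κ, if f e.1 e.2 = j then l e else 0) = l e := by
        rw [← Finset.sum_singleton l e, ← he, hE', Finset.filter_filter, Finset.sum_filter]
        refine Finset.sum_congr rfl fun e' _ => ?_
        by_cases h1 : l e' = 0 <;> simp [h1]
      refine Finset.mem_filter.2 ⟨Finset.mem_univ _, ?_⟩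
      change -_ ≠ _
      rw [hsum, neg_ne_zero]
      exact (Finset.mem_filter.1 he').2
  rw [hTl]
  omega

end system

/-! ### The Lasserre solution -/

/-- Fourier expansion of the indicator of the event that `x` agrees with `x₀` on `A`: only
characters supported on `A` occur. -/
lemma indicator_expand {q : ℕ} [Fact q.Prime] {D : Type*} [Fintype D] [DecidableEq D]
    (A : Finset D) (x₀ : D → ZMod q) :
    ∃ a : (D → ZMod q) → ℂ, (∀ u, a u ≠ 0 → ∀ d, u d ≠ 0 → d ∈ A) ∧
      ∀ x, (if ∀ d ∈ A, x d = x₀ d then (1 : ℂ) else 0)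
        = ∑ u, a u * (ZMod.stdAddChar (u ⬝ᵥ x) : ℂ) := by
  classical
  set B : Finset (D → ZMod q) := Fintype.piFinset fun d => if d ∈ A then univ else {0} with hB
  refine ⟨fun u => if u ∈ B then ((q : ℂ) ^ #A)⁻¹ * ZMod.stdAddChar (-(u ⬝ᵥ x₀)) else 0, ?_, ?_⟩
  · intro u hu d hd
    by_contra hdA
    have huB : u ∈ B := by
      by_contra h
      simp [h] at hu
    rw [hB, Fintype.mem_piFinset] at huB
    have := huB d
    rw [if_neg hdA, Finset.mem_singleton] at this
    exact hd this
  · intro x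
    have hq : (q : ℂ) ≠ 0 := Nat.cast_ne_zero.2 (Fact.out : q.Prime).ne_zero
    have h1 : ∑ u ∈ B, (ZMod.stdAddChar (u ⬝ᵥ (x - x₀)) : ℂ)
        = ∏ d, (if d ∈ A then (if x d = x₀ d then (q : ℂ) else 0) else 1) := by
      have h2 : ∀ u : D → ZMod q, (ZMod.stdAddChar (u ⬝ᵥ (x - x₀)) : ℂ)
          = ∏ d, (ZMod.stdAddChar (u d * (x - x₀) d) : ℂ) := fun u => by
        rw [dotProduct, addChar_sum]
      simp_rw [h2]
      rw [hB, ← Finset.prod_univ_sum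
        (f := fun d (t : ZMod q) => (ZMod.stdAddChar (t * (x - x₀) d) : ℂ))]
      refine Finset.prod_congr rfl fun d _ => ?_
      split_ifs with hd hx
      · rw [AddChar.sum_mulShift _ (ZMod.isPrimitive_stdAddChar q)]
        simp [hx, ZMod.card]
      · rw [AddChar.sum_mulShift _ (ZMod.isPrimitive_stdAddChar q), if_neg, Nat.cast_zero]
        simpa [sub_eq_zero] using hx
      · simp
    have h3 : ∀ u : D → ZMod q, (if u ∈ B then ((q : ℂ) ^ #A)⁻¹ * ZMod.stdAddChar (-(u ⬝ᵥ x₀))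
        else 0) * (ZMod.stdAddChar (u ⬝ᵥ x) : ℂ)
        = if u ∈ B then ((q : ℂ) ^ #A)⁻¹ * (ZMod.stdAddChar (u ⬝ᵥ (x - x₀)) : ℂ) else 0 := by
      intro u
      split_ifs
      · rw [mul_assoc, ← AddChar.map_add_eq_mul, dotProduct_sub]
        congr 3
        ring
      · simp
    simp_rw [h3]
    rw [Finset.sum_ite_mem, Finset.univ_inter, ← Finset.mul_sum, h1]
    split_ifs with h
    · have : ∏ d, (if d ∈ A then (if x d = x₀ d then (q : ℂ) else 0) else 1)
          = ∏ d, (if d ∈ A then (q : ℂ) else 1) := by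
        refine Finset.prod_congr rfl fun d _ => ?_
        split_ifs with h1 h2
        · rfl
        · exact absurd (h d h1) h2
        · rfl
      rw [this, Finset.prod_ite_mem, Finset.univ_inter, Finset.prod_const]
      rw [inv_mul_cancel₀ (pow_ne_zero _ hq)]
    · push Not at h
      obtain ⟨d, hd, hdx⟩ := h
      rw [Finset.prod_eq_zero (Finset.mem_univ d), mul_zero]
      simp [hd, hdx]

section feasible

variable {q : ℕ} [Fact q.Prime] {ι κ ρ W Sg : Type*} [Fintype ι] [DecidableEq ι] [Fintype κ]
  [DecidableEq κ] [Fintype ρ] [DecidableEq ρ] [Fintype W] [DecidableEq W] [Fintype Sg] [DecidableEq Sg]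

/-- The combinations of edge equations touching at most `20 * r` left vertices. -/
noncomputable def smallComb (q : ℕ) [Fact q.Prime] (ι κ : Type*) [Fintype ι] [DecidableEq ι]
    [Fintype κ] [DecidableEq κ] (r : ℕ) : Finset (ι × κ → ZMod q) :=
  univ.filter fun l => #(lsupp l) ≤ 20 * r

lemma mem_smallComb {r : ℕ} {l : ι × κ → ZMod q} : l ∈ smallComb q ι κ r ↔ #(lsupp l) ≤ 20 * r := by
  simp [smallComb]

lemma neg_mem_smallComb {r : ℕ} {l : ι × κ → ZMod q} (h : l ∈ smallComb q ι κ r) :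
    -l ∈ smallComb q ι κ r := by
  rw [mem_smallComb, lsupp_neg]
  exact mem_smallComb.1 h

lemma smallComb_inj {r S : ℕ} {f : ι → κ → ρ} {g : κ → Fin 3 → ZMod q} (hf : Expands f S)
    (hg : DualDist g) (hr : 40 * r ≤ S) :
    ∀ l ∈ smallComb q ι κ r, ∀ l' ∈ smallComb q ι κ r, dlin f g l = dlin f g l' → l = l' := by
  intro l hl l' hl' h
  rw [← sub_eq_zero]
  apply lsupp_eq_empty
  have h1 : #(lsupp (l - l')) ≤ 40 * r := by
    rw [sub_eq_add_neg]
    refine (lsupp_add _ _).trans ?_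
    rw [lsupp_neg]
    have := mem_smallComb.1 hl
    have := mem_smallComb.1 hl'
    omega
  have := card_lsupp_le hf hg (l - l') (h1.trans hr)
  rw [map_sub, h, sub_self] at this
  simpa [vsupp] using this

/-- Composing two derivations may double the number of left vertices used, to at most `40 * r ≤ S`;
the result derives a form on at most `2 * r` vertices, so expansion brings the number back to
`20 * r`. -/
lemma smallComb_trans {r S : ℕ} {f : ι → κ → ρ} {g : κ → Fin 3 → ZMod q} (hf : Expands f S)
    (hg : DualDist g) (hr : 40 * r ≤ S) (u v w : (ι × Fin 3) ⊕ ρ → ZMod q)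
    (hu : #(vsupp u) ≤ r) (hw : #(vsupp w) ≤ r) (l l' : ι × κ → ZMod q)
    (hl : l ∈ smallComb q ι κ r) (hl' : l' ∈ smallComb q ι κ r) (h : dlin f g l = v - u)
    (h' : dlin f g l' = w - v) : l + l' ∈ smallComb q ι κ r := by
  rw [mem_smallComb] at *
  have h1 := lsupp_add l l'
  have h2 := card_lsupp_le hf hg (l + l') (by omega)
  have h3 : dlin f g (l + l') = w - u := by
    rw [map_add, h, h']
    abel
  rw [h3] at h2
  have := vsupp_sub w u
  omega

/-- The pseudo-probability of the partial labelling `Ψ`, when the label of the vertex `v` under the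
assignment `x` of the unknowns is `lab v x`. -/
noncomputable def lasY (f : ι → κ → ρ) (g : κ → Fin 3 → ZMod q) (b : ι × κ → ZMod q) (r : ℕ)
    (lab : W → ((ι × Fin 3) ⊕ ρ → ZMod q) → Sg) (Ψ : Finset (W × Sg)) : ℝ :=
  (∑ x : (ι × Fin 3) ⊕ ρ → ZMod q, if ∀ p ∈ Ψ, lab p.1 x = p.2 then
    (pden (dlin f g) b (smallComb q ι κ r) x).re else 0) /
    (Fintype.card ((ι × Fin 3) ⊕ ρ → ZMod q) : ℝ)

/-- The pseudo-distribution is feasible. The hypothesis `hlab` says that the label of `v` is a faithful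
encoding of the unknowns of the vertex `owner v`; several `v` may share an owner. A quadratic form in
the moment matrix is the pseudo-expectation of the square of a combination of indicators, each
of which involves characters of at most `r` vertices only. -/
lemma lasY_feasible {r S : ℕ} {f : ι → κ → ρ} {g : κ → Fin 3 → ZMod q} (hf : Expands f S)
    (hg : DualDist g) (hr : 40 * r ≤ S) (b : ι × κ → ZMod q)
    (lab : W → ((ι × Fin 3) ⊕ ρ → ZMod q) → Sg) (owner : W → ι ⊕ ρ)
    (hlab : ∀ v x y, lab v x = lab v y ↔ ∀ d, vert d = owner v → x d = y d) :
    ProjFeasible r (lasY f g b r lab) := by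
  classical
  set Λ := smallComb q ι κ r with hΛ
  set P := pden (dlin f g) b Λ with hP
  have hinj := smallComb_inj hf hg hr
  have hneg : ∀ l ∈ Λ, -l ∈ Λ := fun l hl => neg_mem_smallComb hl
  have hzero : (0 : ι × κ → ZMod q) ∈ Λ := by
    rw [hΛ, mem_smallComb]
    simp [lsupp]
  have hcard : (Fintype.card ((ι × Fin 3) ⊕ ρ → ZMod q) : ℝ) ≠ 0 :=
    Nat.cast_ne_zero.2 Fintype.card_ne_zero
  refine ⟨?_, ?_, ?_⟩
  · have h1 := sum_char_mul_pden (dlin f g) b Λ hinj 0 (by simpa using hzero)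
    have h2 := congrArg Complex.re h1
    simp only [map_zero, zero_dotProduct, dotProduct_zero, add_zero, AddChar.map_zero_eq_one,
      one_mul, Complex.re_sum, Complex.natCast_re] at h2
    simp only [lasY, Finset.notMem_empty, false_imp_iff, implies_true, if_true]
    rw [h2, div_self hcard]
  · apply Matrix.PosSemidef.of_dotProduct_mulVec_nonneg
    · ext Ψ₁ Ψ₂
      simp [Finset.union_comm]
    · intro c
      -- each indicator of a partial labelling is a combination of characters of few vertices
      have hΨ : ∀ Ψ : {S : Finset (W × Sg) // S.card ≤ r},
          ∃ a : ((ι × Fin 3) ⊕ ρ → ZMod q) → ℂ, (∀ u, a u ≠ 0 → #(vsupp u) ≤ r) ∧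
          ∀ x, (if ∀ p ∈ Ψ.1, lab p.1 x = p.2 then (1 : ℂ) else 0)
            = ∑ u, a u * (ZMod.stdAddChar (u ⬝ᵥ x) : ℂ) := by
        rintro ⟨Ψ, hΨr⟩
        by_cases hsat : ∃ x₀, ∀ p ∈ Ψ, lab p.1 x₀ = p.2
        · obtain ⟨x₀, hx₀⟩ := hsat
          obtain ⟨a, ha, hax⟩ := indicator_expand
            (univ.filter fun d : (ι × Fin 3) ⊕ ρ => ∃ p ∈ Ψ, vert d = owner p.1) x₀
          refine ⟨a, fun u hu => ?_, fun x => ?_⟩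
          · refine le_trans (Finset.card_le_card ?_)
              ((Finset.card_image_le (s := Ψ) (f := fun p => owner p.1)).trans hΨr)
            intro v hv
            obtain ⟨d, hd, rfl⟩ := Finset.mem_image.1 hv
            have := ha u hu d (Finset.mem_filter.1 hd).2
            obtain ⟨p, hp, hpd⟩ := (Finset.mem_filter.1 this).2
            exact Finset.mem_image.2 ⟨p, hp, hpd.symm⟩
          · rw [← hax x]
            congr 1
            apply propext
            constructor
            · intro h d hd
              obtain ⟨p, hp, hpd⟩ := (Finset.mem_filter.1 hd).2
              exact (hlab p.1 x x₀).1 ((h p hp).trans (hx₀ p hp).symm) d hpd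
            · intro h p hp
              rw [← hx₀ p hp, hlab]
              exact fun d hd => h d (Finset.mem_filter.2 ⟨Finset.mem_univ _, p, hp, hd⟩)
        · refine ⟨0, by simp, fun x => ?_⟩
          rw [if_neg]
          · simp
          · exact fun h => hsat ⟨x, h⟩
      choose a ha hax using hΨ
      set G : ((ι × Fin 3) ⊕ ρ → ZMod q) → ℝ :=
        fun x => ∑ Ψ, c Ψ * (if ∀ p ∈ Ψ.1, lab p.1 x = p.2 then (1 : ℝ) else 0) with hG
      set U : Finset ((ι × Fin 3) ⊕ ρ → ZMod q) := univ.filter fun u => #(vsupp u) ≤ r with hU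
      have hGU : ∀ x, (G x : ℂ) = ∑ u ∈ U, (∑ Ψ, (c Ψ : ℂ) * a Ψ u) *
          (ZMod.stdAddChar (u ⬝ᵥ x) : ℂ) := by
        intro x
        have h1 : ∀ Ψ, ∑ u ∈ U, a Ψ u * (ZMod.stdAddChar (u ⬝ᵥ x) : ℂ)
            = if ∀ p ∈ Ψ.1, lab p.1 x = p.2 then (1 : ℂ) else 0 := by
          intro Ψ
          rw [hax Ψ x]
          refine Finset.sum_subset (Finset.subset_univ _) fun u _ hu => ?_
          have : a Ψ u = 0 := by
            by_contra h
            exact hu (Finset.mem_filter.2 ⟨Finset.mem_univ _, ha Ψ u h⟩)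
          rw [this, zero_mul]
        simp_rw [Finset.sum_mul]
        rw [Finset.sum_comm]
        simp_rw [mul_assoc]
        simp_rw [← Finset.mul_sum, h1]
        rw [hG, Complex.ofReal_sum]
        refine Finset.sum_congr rfl fun Ψ _ => ?_
        split_ifs <;> simp
      have hpos := pden_psd (dlin f g) b Λ hzero hneg hinj U
        (fun u hu v _ w hw l hl l' hl' h h' => smallComb_trans hf hg hr u v w
          (Finset.mem_filter.1 hu).2 (Finset.mem_filter.1 hw).2 l l' hl hl' h h')
        (fun u => ∑ Ψ, (c Ψ : ℂ) * a Ψ u)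
      simp_rw [← hGU] at hpos
      have hre : (∑ x, (G x : ℂ) * (starRingEnd ℂ) (G x : ℂ) * pden (dlin f g) b Λ x).re
          = ∑ x, G x * G x * (P x).re := by
        rw [Complex.re_sum]
        refine Finset.sum_congr rfl fun x _ => ?_
        rw [Complex.conj_ofReal, ← Complex.ofReal_mul, Complex.re_ofReal_mul]
      rw [hre] at hpos
      have hquad : star c ⬝ᵥ (Matrix.of fun Ψ₁ Ψ₂ : {S : Finset (W × Sg) // S.card ≤ r} =>
          lasY f g b r lab (Ψ₁.1 ∪ Ψ₂.1)).mulVec c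
          = (∑ x, G x * G x * (P x).re) / (Fintype.card ((ι × Fin 3) ⊕ ρ → ZMod q) : ℝ) := by
        simp only [dotProduct, Matrix.mulVec, Matrix.of_apply, star_trivial, lasY]
        have h2 : ∀ x, G x * G x * (P x).re = ∑ Ψ₁, ∑ Ψ₂, c Ψ₁ * c Ψ₂ *
            (if ∀ p ∈ Ψ₁.1 ∪ Ψ₂.1, lab p.1 x = p.2 then (P x).re else 0) := by
          intro x
          rw [hG]
          simp only
          rw [Finset.sum_mul_sum, Finset.sum_mul]
          refine Finset.sum_congr rfl fun Ψ₁ _ => ?_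
          rw [Finset.sum_mul]
          refine Finset.sum_congr rfl fun Ψ₂ _ => ?_
          by_cases h3 : ∀ p ∈ Ψ₁.1, lab p.1 x = p.2
          · by_cases h4 : ∀ p ∈ Ψ₂.1, lab p.1 x = p.2
            · have h5 : ∀ p ∈ Ψ₁.1 ∪ Ψ₂.1, lab p.1 x = p.2 := fun p hp =>
                (Finset.mem_union.1 hp).elim (h3 p) (h4 p)
              rw [if_pos h3, if_pos h4, if_pos h5]
              ring
            · have h5 : ¬ ∀ p ∈ Ψ₁.1 ∪ Ψ₂.1, lab p.1 x = p.2 := fun h =>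
                h4 fun p hp => h p (Finset.mem_union_right _ hp)
              rw [if_neg h4, if_neg h5]
              ring
          · have h5 : ¬ ∀ p ∈ Ψ₁.1 ∪ Ψ₂.1, lab p.1 x = p.2 := fun h =>
              h3 fun p hp => h p (Finset.mem_union_left _ hp)
            rw [if_neg h3, if_neg h5]
            ring
        simp_rw [h2]
        rw [Finset.sum_comm, Finset.sum_div]
        refine Finset.sum_congr rfl fun Ψ₁ _ => ?_
        rw [Finset.sum_comm, Finset.sum_div, Finset.mul_sum]
        refine Finset.sum_congr rfl fun Ψ₂ _ => ?_
        rw [← Finset.mul_sum]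
        simp only [hP]
        ring
      rw [hquad]
      exact div_nonneg hpos (Nat.cast_nonneg _)
  · intro v Ψ₁ Ψ₂ _ _
    simp only [lasY]
    rw [← Finset.sum_div, Finset.sum_comm]
    congr 1
    refine Finset.sum_congr rfl fun x _ => ?_
    have h1 : ∀ σ, (∀ p ∈ Ψ₁ ∪ Ψ₂ ∪ {(v, σ)}, lab p.1 x = p.2) ↔
        (lab v x = σ ∧ ∀ p ∈ Ψ₁ ∪ Ψ₂, lab p.1 x = p.2) := by
      intro σ
      constructor
      · intro h
        exact ⟨h (v, σ) (by simp), fun p hp => h p (Finset.mem_union_left _ hp)⟩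
      · rintro ⟨h2, h3⟩ p hp
        rcases Finset.mem_union.1 hp with hp | hp
        · exact h3 p hp
        · rw [Finset.mem_singleton.1 hp]
          exact h2
    simp_rw [h1, ite_and]
    simp

/-- Every edge equation holds with pseudo-probability one. -/
lemma lasY_edge {r S : ℕ} {f : ι → κ → ρ} {g : κ → Fin 3 → ZMod q} (hf : Expands f S)
    (hg : DualDist g) (hr : 40 * r ≤ S) (hr1 : 1 ≤ r) (b : ι × κ → ZMod q)
    (lab : W → ((ι × Fin 3) ⊕ ρ → ZMod q) → Sg) (v w : W) (pr : Sg → Sg) (i : ι) (a : κ)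
    (hpr : ∀ x, pr (lab v x) = lab w x ↔
      ∑ k, x (Sum.inl (i, k)) * g a k + b (i, a) = x (Sum.inr (f i a))) :
    ∑ σ, lasY f g b r lab {(v, σ), (w, pr σ)} = 1 := by
  classical
  set Λ := smallComb q ι κ r with hΛ
  have hcard : (Fintype.card ((ι × Fin 3) ⊕ ρ → ZMod q) : ℝ) ≠ 0 :=
    Nat.cast_ne_zero.2 Fintype.card_ne_zero
  have hq : (q : ℝ) ≠ 0 := Nat.cast_ne_zero.2 (Fact.out : q.Prime).ne_zero
  have hqc : (q : ℂ) ≠ 0 := Nat.cast_ne_zero.2 (Fact.out : q.Prime).ne_zero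
  have h1 : ∑ σ, lasY f g b r lab {(v, σ), (w, pr σ)}
      = (∑ x, if pr (lab v x) = lab w x then (pden (dlin f g) b Λ x).re else 0) /
        (Fintype.card ((ι × Fin 3) ⊕ ρ → ZMod q) : ℝ) := by
    simp only [lasY]
    rw [← Finset.sum_div, Finset.sum_comm]
    congr 1
    refine Finset.sum_congr rfl fun x _ => ?_
    have h2 : ∀ σ, (∀ p ∈ ({(v, σ), (w, pr σ)} : Finset (W × Sg)), lab p.1 x = p.2) ↔
        (lab v x = σ ∧ pr σ = lab w x) := by
      intro σ
      simp [eq_comm]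
    simp_rw [h2, ite_and]
    simp [hΛ]
  -- the residual of the edge equation, as the affine form of a one-edge combination
  have hres : ∀ (t : ZMod q) (x : (ι × Fin 3) ⊕ ρ → ZMod q),
      dlin f g (Pi.single (i, a) t) ⬝ᵥ x + b ⬝ᵥ (Pi.single (i, a) t)
      = t * (∑ k, x (Sum.inl (i, k)) * g a k + b (i, a) - x (Sum.inr (f i a))) := by
    intro t x
    have e1 : ∑ p : ι × Fin 3, (∑ a', (Pi.single (i, a) t : ι × κ → ZMod q) (p.1, a') * g a' p.2) *
        x (Sum.inl p) = ∑ k, t * g a k * x (Sum.inl (i, k)) := by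
      rw [Fintype.sum_prod_type, Finset.sum_eq_single_of_mem i (Finset.mem_univ _)]
      · refine Finset.sum_congr rfl fun k _ => ?_
        congr 1
        rw [Finset.sum_eq_single_of_mem a (Finset.mem_univ _)]
        · simp
        · intro a' _ ha'
          simp [ha']
      · intro i' _ hi'
        refine Finset.sum_eq_zero fun k _ => ?_
        rw [Finset.sum_eq_zero, zero_mul]
        intro a' _
        simp [hi']
    have e2 : ∑ j : ρ, (-∑ e : ι × κ, if f e.1 e.2 = j then (Pi.single (i, a) t : ι × κ → ZMod q) e
        else 0) * x (Sum.inr j) = - (t * x (Sum.inr (f i a))) := by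
      rw [Finset.sum_eq_single_of_mem (f i a) (Finset.mem_univ _)]
      · rw [Finset.sum_eq_single_of_mem (i, a) (Finset.mem_univ _)]
        · simp
        · intro e _ he
          simp [he]
      · intro j _ hj
        rw [Finset.sum_eq_zero, neg_zero, zero_mul]
        intro e _
        by_cases he : e = (i, a)
        · subst he
          simp [hj.symm]
        · simp [he]
    have e3 : dlin f g (Pi.single (i, a) t) ⬝ᵥ x
        = ∑ k, t * g a k * x (Sum.inl (i, k)) + - (t * x (Sum.inr (f i a))) := by
      rw [← e1, ← e2, dotProduct, Fintype.sum_sum_type]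
      rfl
    rw [e3, dotProduct_single, mul_sub, mul_add, Finset.mul_sum]
    have e4 : ∑ k, t * g a k * x (Sum.inl (i, k)) = ∑ k, t * (x (Sum.inl (i, k)) * g a k) :=
      Finset.sum_congr rfl fun k _ => by ring
    rw [e4]
    ring
  have hmem : ∀ t : ZMod q, -(Pi.single (i, a) t : ι × κ → ZMod q) ∈ Λ := by
    intro t
    apply neg_mem_smallComb
    rw [mem_smallComb]
    have : lsupp (Pi.single (i, a) t : ι × κ → ZMod q) ⊆ {i} := by
      intro i' hi'
      obtain ⟨e, he, rfl⟩ := Finset.mem_image.1 hi'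
      have he' := (Finset.mem_filter.1 he).2
      by_cases h : e = (i, a)
      · simp [h]
      · simp [h] at he'
    have := Finset.card_le_card this
    simp only [Finset.card_singleton] at this
    omega
  have hsum : ∀ t : ZMod q, ∑ x : (ι × Fin 3) ⊕ ρ → ZMod q,
      (ZMod.stdAddChar (t * (∑ k, x (Sum.inl (i, k)) * g a k + b (i, a) - x (Sum.inr (f i a)))) : ℂ)
        * pden (dlin f g) b Λ x = (Fintype.card ((ι × Fin 3) ⊕ ρ → ZMod q) : ℂ) := by
    intro t
    rw [← sum_char_mul_pden (dlin f g) b Λ (smallComb_inj hf hg hr) _ (hmem t)]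
    simp_rw [hres]
  have hind : ∀ x : (ι × Fin 3) ⊕ ρ → ZMod q,
      (if pr (lab v x) = lab w x then pden (dlin f g) b Λ x else 0)
      = (q : ℂ)⁻¹ * ∑ t : ZMod q, (ZMod.stdAddChar (t * (∑ k, x (Sum.inl (i, k)) * g a k +
        b (i, a) - x (Sum.inr (f i a)))) : ℂ) * pden (dlin f g) b Λ x := by
    intro x
    rw [← Finset.sum_mul, AddChar.sum_mulShift _ (ZMod.isPrimitive_stdAddChar q)]
    simp only [hpr, sub_eq_zero, ZMod.card]
    split_ifs
    · rw [inv_mul_cancel_left₀ hqc]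
    · simp
  have htot : ∑ x : (ι × Fin 3) ⊕ ρ → ZMod q,
      (if pr (lab v x) = lab w x then pden (dlin f g) b Λ x else 0)
      = (Fintype.card ((ι × Fin 3) ⊕ ρ → ZMod q) : ℂ) := by
    simp_rw [hind]
    rw [← Finset.mul_sum, Finset.sum_comm]
    simp_rw [hsum]
    rw [Finset.sum_const, Finset.card_univ, ZMod.card, nsmul_eq_mul, inv_mul_cancel_left₀ hqc]
  have hre := congrArg Complex.re htot
  rw [Complex.re_sum, Complex.natCast_re] at hre
  rw [h1, div_eq_one_iff_eq hcard, ← hre]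
  refine Finset.sum_congr rfl fun x _ => ?_
  split_ifs <;> simp

end feasible

/-! ### The Reed–Solomon code and soundness -/

/-- The Reed–Solomon code of dimension three has dual distance four: a dual vector of weight at
most three is detected by the polynomial vanishing at all but one point of its support. -/
lemma dualDist_rs {q : ℕ} [Fact q.Prime] {κ : Type*} [Fintype κ] [DecidableEq κ] (pt : κ → ZMod q)
    (hpt : Function.Injective pt) : DualDist (fun (a : κ) (k : Fin 3) => pt a ^ (k : ℕ)) := by
  intro ν hν hne
  by_contra hlt
  obtain ⟨a₀, ha₀⟩ := Function.ne_iff.1 hne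
  set s := univ.filter fun a => ν a ≠ 0 with hs
  have ha₀s : a₀ ∈ s := by simpa [hs] using ha₀
  set p : Polynomial (ZMod q) := ∏ a ∈ s.erase a₀, (Polynomial.X - Polynomial.C (pt a)) with hp
  have hdeg : p.natDegree < 3 := by
    rw [hp, Polynomial.natDegree_prod_of_monic _ _ fun a _ => Polynomial.monic_X_sub_C _]
    simp only [Polynomial.natDegree_X_sub_C, Finset.sum_const, smul_eq_mul, mul_one]
    rw [Finset.card_erase_of_mem ha₀s]
    omega
  have h1 : ∑ a, ν a * p.eval (pt a) = 0 := by
    simp_rw [Polynomial.eval_eq_sum_range' hdeg, Finset.mul_sum]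
    rw [Finset.sum_comm]
    refine Finset.sum_eq_zero fun k hk => ?_
    have := hν ⟨k, Finset.mem_range.1 hk⟩
    simp only at this
    rw [← mul_zero (p.coeff k), ← this, Finset.mul_sum]
    exact Finset.sum_congr rfl fun a _ => by ring
  rw [Finset.sum_eq_single_of_mem a₀ (Finset.mem_univ _)] at h1
  · rcases mul_eq_zero.1 h1 with h | h
    · exact ha₀ h
    · rw [hp, Polynomial.eval_prod, Finset.prod_eq_zero_iff] at h
      obtain ⟨a, ha, h⟩ := h
      rw [Polynomial.eval_sub, Polynomial.eval_X, Polynomial.eval_C, sub_eq_zero] at h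
      exact (Finset.mem_erase.1 ha).1 (hpt h).symm
  · intro a _ ha
    by_cases h0 : ν a = 0
    · rw [h0, zero_mul]
    · rw [hp, Polynomial.eval_prod, Finset.prod_eq_zero (i := a), mul_zero]
      · exact Finset.mem_erase.2 ⟨ha, by simpa [hs] using h0⟩
      · simp

/-- For a suitable choice of the shifts `b`, no assignment satisfies many edge equations: the
exponential moment of the number of satisfied equations, averaged over `b` and summed over all
assignments, is small. -/
lemma exists_shift {q : ℕ} [Fact q.Prime] {ι κ ρ : Type*} [Fintype ι] [DecidableEq ι] [Fintype κ]
    [DecidableEq κ] [Fintype ρ] [DecidableEq ρ] (f : ι → κ → ρ) (g : κ → Fin 3 → ZMod q)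
    (hκ : Fintype.card κ ≤ q) :
    ∃ b : ι × κ → ZMod q, ∀ (z : ι → Fin 3 → ZMod q) (x : ρ → ZMod q),
      (#(univ.filter fun e : ι × κ => ∑ k, z e.1 k * g e.2 k + b e = x (f e.1 e.2)) : ℝ)
        ≤ (3 * Fintype.card ι + Fintype.card ρ) * Real.log q + 2 * Fintype.card ι := by
  classical
  set N : (ι × κ → ZMod q) → ((ι → Fin 3 → ZMod q) × (ρ → ZMod q)) → ℕ := fun b y =>
    #(univ.filter fun e : ι × κ => ∑ k, y.1 e.1 k * g e.2 k + b e = y.2 (f e.1 e.2)) with hN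
  have hq2 : 2 ≤ q := (Fact.out : q.Prime).two_le
  have hq0 : (0 : ℝ) < q := by positivity
  set M : ℝ := (q : ℝ) - 1 + Real.exp 1 with hM
  have hMpos : 0 < M := by
    have : (1 : ℝ) ≤ q := by exact_mod_cast (by omega : 1 ≤ q)
    have := Real.exp_pos 1
    linarith
  have hone : ∀ y, ∑ b, Real.exp (N b y) = M ^ Fintype.card (ι × κ) := by
    intro y
    have h1 : ∀ b, Real.exp (N b y) = ∏ e : ι × κ,
        if b e = y.2 (f e.1 e.2) - ∑ k, y.1 e.1 k * g e.2 k then Real.exp 1 else 1 := by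
      intro b
      rw [Finset.prod_ite, Finset.prod_const, Finset.prod_const_one, mul_one, ← Real.exp_nat_mul,
        mul_one, hN]
      simp only
      congr 3
      ext e
      simp only [Finset.mem_filter, Finset.mem_univ, true_and]
      rw [eq_sub_iff_add_eq, add_comm]
    simp_rw [h1]
    rw [← Fintype.piFinset_univ, ← Finset.prod_univ_sum (f := fun (e : ι × κ) (t : ZMod q) =>
      if t = y.2 (f e.1 e.2) - ∑ k, y.1 e.1 k * g e.2 k then Real.exp 1 else 1)]
    have h2 : ∀ c : ZMod q, ∑ t : ZMod q, (if t = c then Real.exp 1 else 1) = M := by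
      intro c
      have : ∀ t : ZMod q, (if t = c then Real.exp 1 else 1)
          = 1 + if t = c then (Real.exp 1 - 1) else 0 := by
        intro t
        split_ifs <;> ring
      simp_rw [this]
      rw [Finset.sum_add_distrib, Finset.sum_ite_eq' univ c]
      simp [ZMod.card, hM]
      ring
    simp_rw [h2]
    rw [Finset.prod_const, Finset.card_univ]
  set Q : ℝ := (Fintype.card ((ι → Fin 3 → ZMod q) × (ρ → ZMod q)) : ℝ) with hQ
  have hsum : ∑ b : ι × κ → ZMod q, ∑ y, Real.exp (N b y)
      = ∑ _b : ι × κ → ZMod q, Q * (M / q) ^ Fintype.card (ι × κ) := by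
    rw [Finset.sum_comm]
    simp_rw [hone]
    rw [Finset.sum_const, Finset.sum_const, Finset.card_univ, Finset.card_univ, nsmul_eq_mul,
      nsmul_eq_mul, ← hQ]
    simp only [Fintype.card_fun, ZMod.card, Nat.cast_pow, div_pow]
    field_simp
  obtain ⟨b, -, hb⟩ := Finset.exists_le_of_sum_le Finset.univ_nonempty hsum.le
  refine ⟨b, fun z x => ?_⟩
  have h1 : Real.exp (N b (z, x)) ≤ Q * (M / q) ^ Fintype.card (ι × κ) :=
    (Finset.single_le_sum (f := fun y => Real.exp (N b y)) (fun y _ => (Real.exp_pos _).le)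
      (Finset.mem_univ (z, x))).trans hb
  have hQ' : Q = (q : ℝ) ^ (3 * Fintype.card ι + Fintype.card ρ) := by
    rw [hQ]
    simp [ZMod.card, pow_add, pow_mul]
  have h2 : M / q ≤ Real.exp (2 / q) := by
    refine le_trans ?_ (Real.add_one_le_exp _)
    rw [div_add_one hq0.ne', div_le_div_iff_of_pos_right hq0, hM]
    have := Real.exp_one_lt_d9
    linarith
  have h3 : Real.exp (N b (z, x)) ≤ Real.exp ((3 * Fintype.card ι + Fintype.card ρ) * Real.log q
      + 2 * Fintype.card ι) := by
    refine h1.trans ?_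
    rw [Real.exp_add, hQ']
    have e1 : Real.exp ((3 * Fintype.card ι + Fintype.card ρ) * Real.log q)
        = (q : ℝ) ^ (3 * Fintype.card ι + Fintype.card ρ) := by
      rw [← Real.rpow_natCast, Real.rpow_def_of_pos hq0]
      congr 1
      push_cast
      ring
    rw [e1]
    refine mul_le_mul_of_nonneg_left ?_ (by positivity)
    refine (pow_le_pow_left₀ (by positivity) h2 _).trans ?_
    rw [← Real.exp_nat_mul, Real.exp_le_exp, Fintype.card_prod]
    push_cast
    have hκ' : (Fintype.card κ : ℝ) ≤ q := by exact_mod_cast hκ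
    have : (Fintype.card κ : ℝ) / q ≤ 1 := (div_le_one hq0).2 hκ'
    calc (Fintype.card ι : ℝ) * Fintype.card κ * (2 / q)
        = 2 * Fintype.card ι * (Fintype.card κ / q) := by ring
      _ ≤ 2 * Fintype.card ι * 1 := by gcongr
      _ = _ := mul_one _
  exact Real.exp_le_exp.1 h3

/-! ### Random graphs with small-set expansion -/

/-- Few functions `h` have, at every `e ∈ F`, a collision with an earlier vertex of `T`: such an `h`
is determined by its values off `F` and by the choice, for each `e ∈ F`, of the earlier vertex. -/
lemma card_collide {n K M : ℕ} (T : Finset (Fin n)) (F : Finset (Fin n × Fin K)) :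
    #(univ.filter fun h : Fin n × Fin K → Fin M =>
        ∀ e ∈ F, ∃ i ∈ T, i < e.1 ∧ h (i, e.2) = h e) * M ^ #F
      ≤ M ^ (n * K) * #T ^ #F := by
  classical
  set A := univ.filter fun h : Fin n × Fin K → Fin M =>
        ∀ e ∈ F, ∃ i ∈ T, i < e.1 ∧ h (i, e.2) = h e with hA
  have hAm : ∀ h : A, ∀ e : F, ∃ i : T, i.1 < e.1.1 ∧ h.1 (i.1, e.1.2) = h.1 e.1 := by
    intro h e
    obtain ⟨i, hi, h1⟩ := (Finset.mem_filter.1 h.2).2 e.1 e.2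
    exact ⟨⟨i, hi⟩, h1⟩
  choose c hc1 hc2 using hAm
  have hinj : Function.Injective (fun h : A => ((fun e : {e // e ∉ F} => h.1 e.1), c h)) := by
    intro h h' heq
    obtain ⟨h1, h2⟩ := Prod.ext_iff.1 heq
    simp only at h1 h2
    apply Subtype.ext
    funext e
    obtain ⟨i, a⟩ := e
    induction i using WellFoundedLT.induction with
    | ind i ih =>
      by_cases he : (i, a) ∈ F
      · rw [← hc2 h ⟨(i, a), he⟩, ← hc2 h' ⟨(i, a), he⟩, ← h2]
        exact ih _ (hc1 h ⟨(i, a), he⟩)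
      · exact congrFun h1 ⟨(i, a), he⟩
  have hcard := Fintype.card_le_of_injective _ hinj
  rw [Fintype.card_prod, Fintype.card_fun, Fintype.card_fun, Fintype.card_coe, Fintype.card_coe,
    Fintype.card_coe, Fintype.card_fin] at hcard
  have h3 : Fintype.card {e // e ∉ F} + #F = n * K := by
    rw [Fintype.card_subtype_compl, Fintype.card_coe, Fintype.card_prod, Fintype.card_fin,
      Fintype.card_fin]
    have := Finset.card_le_univ F
    rw [Fintype.card_prod, Fintype.card_fin, Fintype.card_fin] at this
    omega
  calc #A * M ^ #F ≤ (M ^ Fintype.card {e // e ∉ F} * #T ^ #F) * M ^ #F :=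
        Nat.mul_le_mul_right _ hcard
    _ = M ^ (n * K) * #T ^ #F := by rw [← h3, pow_add]; ring

/-- Chernoff bound for the number of functions `h` taking the value `t` too often in column `a`. The
exponential moment is taken at `1 / 2`, and `0.65` bounds `exp (1 / 2) - 1`. -/
lemma card_degree {n K M : ℕ} (hM : 0 < M) (a : Fin K) (t : Fin M) (τ : ℝ) :
    (#(univ.filter fun h : Fin n × Fin K → Fin M =>
        τ < (#(univ.filter fun i => h (i, a) = t) : ℝ)) : ℝ)
      ≤ (M : ℝ) ^ (n * K) * Real.exp (0.65 * n / M - τ / 2) := by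
  classical
  have hM' : (0 : ℝ) < M := by exact_mod_cast hM
  have hexp : Real.exp (1 / 2) ≤ 1.65 := by
    have h1 : Real.exp (1 / 2) ^ 2 = Real.exp 1 := by
      rw [← Real.exp_nat_mul]
      norm_num
    have := Real.exp_one_lt_d9
    nlinarith [Real.exp_pos (1 / 2)]
  have h1 : ∀ h : Fin n × Fin K → Fin M,
      Real.exp ((#(univ.filter fun i => h (i, a) = t) : ℝ) * (1 / 2))
      = ∏ e : Fin n × Fin K, if e.2 = a ∧ h e = t then Real.exp (1 / 2) else 1 := by
    intro h
    rw [Real.exp_nat_mul, Finset.prod_ite, Finset.prod_const_one, mul_one, Finset.prod_const]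
    congr 1
    refine Finset.card_nbij' (fun i => (i, a)) Prod.fst ?_ ?_ ?_ ?_
    · intro i hi
      simpa using hi
    · rintro ⟨i, a'⟩ he
      simp only [Finset.coe_filter, Finset.mem_univ, true_and, Set.mem_ofPred_eq] at he ⊢
      rw [← he.1]
      exact he.2
    · intro i _
      rfl
    · rintro ⟨i, a'⟩ he
      simp only [Finset.coe_filter, Finset.mem_univ, true_and, Set.mem_ofPred_eq] at he
      rw [← he.1]
  have h2 : ∑ h : Fin n × Fin K → Fin M,
      Real.exp ((#(univ.filter fun i => h (i, a) = t) : ℝ) * (1 / 2))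
      ≤ (M : ℝ) ^ (n * K) * Real.exp (0.65 * n / M) := by
    simp_rw [h1]
    rw [← Fintype.piFinset_univ, ← Finset.prod_univ_sum (f := fun (e : Fin n × Fin K) (s : Fin M) =>
      if e.2 = a ∧ s = t then Real.exp (1 / 2) else 1)]
    have h3 : ∀ e : Fin n × Fin K, ∑ s : Fin M, (if e.2 = a ∧ s = t then Real.exp (1 / 2) else 1)
        = M * (if e.2 = a then 1 + (Real.exp (1 / 2) - 1) / M else 1) := by
      intro e
      by_cases he : e.2 = a
      · have : ∀ s : Fin M, (if e.2 = a ∧ s = t then Real.exp (1 / 2) else 1)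
          = 1 + if s = t then (Real.exp (1 / 2) - 1) else 0 := by
          intro s
          by_cases hs : s = t <;> simp [he, hs]
        simp_rw [this]
        rw [Finset.sum_add_distrib, Finset.sum_ite_eq' univ t, if_pos he]
        simp
        field_simp
      · simp [he]
    simp_rw [h3]
    rw [Finset.prod_mul_distrib, Finset.prod_const, Finset.card_univ, Fintype.card_prod,
      Fintype.card_fin, Fintype.card_fin]
    refine mul_le_mul_of_nonneg_left ?_ (by positivity)
    rw [Fintype.prod_prod_type]
    simp only [Finset.prod_ite_eq', Finset.mem_univ, if_true, Finset.prod_const, Finset.card_univ,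
      Fintype.card_fin]
    have h4 : 1 + (Real.exp (1 / 2) - 1) / M ≤ Real.exp (0.65 / M) := by
      refine le_trans ?_ (Real.add_one_le_exp _)
      rw [add_comm]
      gcongr
      linarith
    have h5 : 0 ≤ 1 + (Real.exp (1 / 2) - 1) / M := by
      have : 1 ≤ Real.exp (1 / 2) := Real.one_le_exp (by norm_num)
      have : 0 ≤ (Real.exp (1 / 2) - 1) / M := div_nonneg (by linarith) hM'.le
      linarith
    refine (pow_le_pow_left₀ h5 h4 n).trans ?_
    rw [← Real.exp_nat_mul, Real.exp_le_exp]
    apply le_of_eq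
    ring
  rw [sub_eq_add_neg, Real.exp_add, ← mul_assoc]
  have h6 : (#(univ.filter fun h : Fin n × Fin K → Fin M =>
        τ < (#(univ.filter fun i => h (i, a) = t) : ℝ)) : ℝ) * Real.exp (τ / 2)
      ≤ (M : ℝ) ^ (n * K) * Real.exp (0.65 * n / M) := by
    refine le_trans ?_ h2
    rw [← nsmul_eq_mul, ← Finset.sum_const]
    refine le_trans (Finset.sum_le_sum fun h hh => ?_) (Finset.sum_le_sum_of_subset_of_nonneg
      (Finset.subset_univ _) fun h _ _ => (Real.exp_pos _).le)
    rw [Real.exp_le_exp]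
    have := (Finset.mem_filter.1 hh).2
    linarith
  rw [Real.exp_neg, ← div_eq_mul_inv, le_div_iff₀ (Real.exp_pos _)]
  exact h6

/-- Union bound over the failures counted by `card_collide` and `card_degree`: some `h` takes no value
more than `1.5 * K` times in a column, and no set `T` of at most `S` vertices spans more than
`9 * #T / 5` edges that collide with an earlier vertex of `T`. -/
lemma exists_good {n K M S : ℕ} (hM : 0 < M)
    (hb : ∑ s ∈ Finset.Icc 1 S, (n : ℝ) ^ s * ((s : ℝ) ^ 2 * K / M) ^ (9 * s / 5 + 1)
      + K * M * Real.exp (0.65 * n / M - 0.75 * K) < 1) :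
    ∃ h : Fin n × Fin K → Fin M,
      (∀ a t, (#(univ.filter fun i => h (i, a) = t) : ℝ) ≤ 1.5 * K) ∧
      ∀ T : Finset (Fin n), ∀ F ⊆ T ×ˢ (univ : Finset (Fin K)), 1 ≤ #T → #T ≤ S →
        #F = 9 * #T / 5 + 1 → ∃ e ∈ F, ∀ i ∈ T, i < e.1 → h (i, e.2) ≠ h e := by
  classical
  by_contra hcon
  push Not at hcon
  have hM' : (0 : ℝ) < M := by exact_mod_cast hM
  set bad1 : Finset (Fin n × Fin K → Fin M) := (Finset.Icc 1 S).biUnion fun s =>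
    (Finset.powersetCard s univ).biUnion fun T =>
    (Finset.powersetCard (9 * s / 5 + 1) (T ×ˢ (univ : Finset (Fin K)))).biUnion fun F =>
    univ.filter fun h => ∀ e ∈ F, ∃ i ∈ T, i < e.1 ∧ h (i, e.2) = h e with hbad1
  set bad2 : Finset (Fin n × Fin K → Fin M) := (univ : Finset (Fin K × Fin M)).biUnion fun p =>
    univ.filter fun h => (1.5 * K : ℝ) < (#(univ.filter fun i => h (i, p.1) = p.2) : ℝ) with hbad2
  have hcover : (univ : Finset (Fin n × Fin K → Fin M)) ⊆ bad1 ∪ bad2 := by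
    intro h _
    rw [Finset.mem_union]
    by_cases hd : ∀ a t, (#(univ.filter fun i => h (i, a) = t) : ℝ) ≤ 1.5 * K
    · left
      obtain ⟨T, F, hF, hT1, hTS, hFc, hcol⟩ := hcon h hd
      simp only [hbad1, Finset.mem_biUnion, Finset.mem_powersetCard, Finset.mem_Icc]
      exact ⟨#T, ⟨hT1, hTS⟩, T, ⟨Finset.subset_univ _, rfl⟩, F, ⟨hF, hFc⟩,
        Finset.mem_filter.2 ⟨Finset.mem_univ _, hcol⟩⟩
    · right
      push Not at hd
      obtain ⟨a, t, hat⟩ := hd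
      exact Finset.mem_biUnion.2 ⟨(a, t), Finset.mem_univ _,
        Finset.mem_filter.2 ⟨Finset.mem_univ _, hat⟩⟩
  have h1 : (#bad1 : ℝ) ≤ (M : ℝ) ^ (n * K) *
      ∑ s ∈ Finset.Icc 1 S, (n : ℝ) ^ s * ((s : ℝ) ^ 2 * K / M) ^ (9 * s / 5 + 1) := by
    rw [Finset.mul_sum]
    refine (Nat.cast_le.2 Finset.card_biUnion_le).trans ?_
    rw [Nat.cast_sum]
    refine Finset.sum_le_sum fun s _ => ?_
    refine (Nat.cast_le.2 (Finset.card_biUnion_le_card_mul _ _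
      ((s * K) ^ (9 * s / 5 + 1) * (M ^ (n * K) * s ^ (9 * s / 5 + 1) / M ^ (9 * s / 5 + 1)))
      ?_)).trans ?_
    · intro T hT
      have hTs := (Finset.mem_powersetCard.1 hT).2
      refine (Finset.card_biUnion_le_card_mul _ _
        (M ^ (n * K) * s ^ (9 * s / 5 + 1) / M ^ (9 * s / 5 + 1)) ?_).trans ?_
      · intro F hF
        have hFs := (Finset.mem_powersetCard.1 hF).2
        have := card_collide (M := M) T F
        rw [hFs, hTs] at this
        rwa [Nat.le_div_iff_mul_le (by positivity)]
      · refine Nat.mul_le_mul_right _ ?_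
        rw [Finset.card_powersetCard, Finset.card_product, hTs, Finset.card_univ, Fintype.card_fin]
        exact Nat.choose_le_pow _ _
    · rw [Finset.card_powersetCard, Finset.card_univ, Fintype.card_fin]
      push_cast
      have e1 : ((n.choose s : ℕ) : ℝ) ≤ (n : ℝ) ^ s := by exact_mod_cast Nat.choose_le_pow _ _
      have e2 : ((M ^ (n * K) * s ^ (9 * s / 5 + 1) / M ^ (9 * s / 5 + 1) : ℕ) : ℝ)
          ≤ (M : ℝ) ^ (n * K) * (s : ℝ) ^ (9 * s / 5 + 1) / (M : ℝ) ^ (9 * s / 5 + 1) := by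
        refine Nat.cast_div_le.trans ?_
        push_cast
        exact le_rfl
      calc ((n.choose s : ℕ) : ℝ) * (((s : ℝ) * K) ^ (9 * s / 5 + 1) *
            ((M ^ (n * K) * s ^ (9 * s / 5 + 1) / M ^ (9 * s / 5 + 1) : ℕ) : ℝ))
          ≤ (n : ℝ) ^ s * (((s : ℝ) * K) ^ (9 * s / 5 + 1) *
            ((M : ℝ) ^ (n * K) * (s : ℝ) ^ (9 * s / 5 + 1) / (M : ℝ) ^ (9 * s / 5 + 1))) := by
            gcongr
        _ = _ := by
            rw [div_pow, mul_pow, mul_pow]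
            ring
  have h2 : (#bad2 : ℝ) ≤ (M : ℝ) ^ (n * K) *
      (K * M * Real.exp (0.65 * n / M - 0.75 * K)) := by
    refine (Nat.cast_le.2 Finset.card_biUnion_le).trans ?_
    rw [Nat.cast_sum]
    refine (Finset.sum_le_sum fun p _ => card_degree hM p.1 p.2 (1.5 * K)).trans ?_
    rw [Finset.sum_const, Finset.card_univ, Fintype.card_prod, Fintype.card_fin, Fintype.card_fin,
      nsmul_eq_mul]
    push_cast
    apply le_of_eq
    rw [show (1.5 * (K : ℝ)) / 2 = 0.75 * K by ring]
    ring
  have h3 : (M : ℝ) ^ (n * K) ≤ #bad1 + #bad2 := by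
    have := (Finset.card_le_card hcover).trans (Finset.card_union_le _ _)
    rw [Finset.card_univ, Fintype.card_fun, Fintype.card_prod, Fintype.card_fin, Fintype.card_fin,
      Fintype.card_fin] at this
    exact_mod_cast this
  have h4 : (0 : ℝ) < (M : ℝ) ^ (n * K) := by positivity
  nlinarith

/-- A nearly regular bipartite graph with strong small-set expansion. The right vertices are split
into `K` classes, and `pos j` is the class of `j`; the `a`-th neighbour of a left vertex lies in
class `a`. -/
lemma exists_graph {n K M S : ℕ} (hM : 0 < M) (hK : 0 < K) (hKM : K * M ≤ n)
    (hb : ∑ s ∈ Finset.Icc 1 S, (n : ℝ) ^ s * ((s : ℝ) ^ 2 * K / M) ^ (9 * s / 5 + 1)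
      + K * M * Real.exp (0.65 * n / M - 0.75 * K) < 1) :
    ∃ (f : Fin n → Fin K → Fin n) (pos : Fin n → Fin K), (∀ i a, pos (f i a) = a) ∧
      (∀ j, (#(univ.filter fun i => f i (pos j) = j) : ℝ) ≤ 1.5 * K) ∧ Expands f S := by
  classical
  obtain ⟨h, hdeg, hexp⟩ := exists_good hM hb
  have hlt : ∀ (a : Fin K) (t : Fin M), a.1 + K * t.1 < n := by
    intro a t
    have h1 : K * (t.1 + 1) ≤ K * M := Nat.mul_le_mul_left _ t.2
    have := a.2
    rw [mul_add] at h1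
    omega
  set f : Fin n → Fin K → Fin n := fun i a => ⟨a.1 + K * (h (i, a)).1, hlt _ _⟩ with hf
  have hfinj : ∀ i a i' a', f i a = f i' a' → a = a' ∧ h (i, a) = h (i', a') := by
    intro i a i' a' hff
    have h1 : a.1 + K * (h (i, a)).1 = a'.1 + K * (h (i', a')).1 := congrArg Fin.val hff
    have h2 : a.1 = a'.1 := by
      have := congrArg (· % K) h1
      simpa [Nat.add_mul_mod_self_left, Nat.mod_eq_of_lt a.2, Nat.mod_eq_of_lt a'.2] using this
    refine ⟨Fin.ext h2, Fin.ext ?_⟩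
    rw [h2] at h1
    exact Nat.eq_of_mul_eq_mul_left hK (Nat.add_left_cancel h1)
  have hpos : ∀ i a, (⟨(f i a).1 % K, Nat.mod_lt _ hK⟩ : Fin K) = a := by
    intro i a
    apply Fin.ext
    simp [hf, Nat.add_mul_mod_self_left, Nat.mod_eq_of_lt a.2]
  refine ⟨f, fun j => ⟨j.1 % K, Nat.mod_lt _ hK⟩, hpos, ?_, ?_⟩
  · intro j
    set a : Fin K := ⟨j.1 % K, Nat.mod_lt _ hK⟩ with ha
    by_cases hex : ∃ i, f i a = j
    · obtain ⟨i₀, hi₀⟩ := hex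
      refine le_trans (Nat.cast_le.2 (Finset.card_le_card ?_)) (hdeg a (h (i₀, a)))
      intro i hi
      rw [Finset.mem_filter] at hi ⊢
      exact ⟨hi.1, (hfinj _ _ _ _ (hi.2.trans hi₀.symm)).2⟩
    · rw [Finset.filter_false_of_mem fun i _ hi => hex ⟨i, hi⟩]
      simp
      positivity
  · intro E' hE'
    set T := E'.image Prod.fst with hT
    set C := E'.filter fun e => ∃ i, i < e.1 ∧ (i, e.2) ∈ E' ∧ h (i, e.2) = h e with hC
    have h1 : #E' ≤ #C + #(E'.image fun e => f e.1 e.2) := by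
      rw [← Finset.card_filter_add_card_filter_not
        (fun e => ∃ i, i < e.1 ∧ (i, e.2) ∈ E' ∧ h (i, e.2) = h e) (s := E')]
      refine Nat.add_le_add_left ?_ _
      refine Finset.card_le_card_of_injOn (fun e => f e.1 e.2) ?_ ?_
      · intro e he
        exact Finset.mem_coe.2 (Finset.mem_image_of_mem (fun e : Fin n × Fin K => f e.1 e.2)
          (Finset.mem_filter.1 he).1)
      · rintro ⟨i, a⟩ he ⟨i', a'⟩ he' hff
        obtain ⟨rfl, h3⟩ := hfinj _ _ _ _ hff
        rw [Finset.mem_coe, Finset.mem_filter] at he he'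
        rcases lt_trichotomy i i' with hii | hii | hii
        · exact absurd ⟨i, hii, he.1, h3⟩ he'.2
        · rw [hii]
        · exact absurd ⟨i', hii, he'.1, h3.symm⟩ he.2
    have h2 : 5 * #C ≤ 9 * #T := by
      by_contra hlt'
      have hC1 : 9 * #T / 5 + 1 ≤ #C := by omega
      obtain ⟨F, hFC, hFc⟩ := Finset.exists_subset_card_eq hC1
      have hFE : F ⊆ E' := hFC.trans (Finset.filter_subset _ _)
      have hFT : F ⊆ T ×ˢ (univ : Finset (Fin K)) := fun e he =>
        Finset.mem_product.2 ⟨Finset.mem_image_of_mem _ (hFE he), Finset.mem_univ _⟩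
      have hT1 : 1 ≤ #T := by
        rw [Nat.one_le_iff_ne_zero, Finset.card_ne_zero]
        have : F.Nonempty := by
          rw [← Finset.card_pos]
          omega
        obtain ⟨e, he⟩ := this
        exact ⟨_, Finset.mem_image_of_mem _ (hFE he)⟩
      obtain ⟨e, he, hne⟩ := hexp T F hFT hT1 hE' hFc
      obtain ⟨i, hi, hiE, hih⟩ := (Finset.mem_filter.1 (hFC he)).2
      exact hne i (Finset.mem_image_of_mem Prod.fst hiE) hi hih
    omega

/-! ### The choice of the parameters -/

/-- Bertrand's postulate, applied to the integer above `X / 2`. -/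
lemma exists_prime_succ {X : ℝ} (hX : 2 ≤ X) :
    ∃ K : ℕ, Nat.Prime (K + 1) ∧ X / 2 ≤ K ∧ (K : ℝ) ≤ X := by
  set k := ⌊X / 2⌋₊ with hk
  have hk1 : (k : ℝ) ≤ X / 2 := Nat.floor_le (by linarith)
  have hk2 : X / 2 < k + 1 := Nat.lt_floor_add_one _
  have hk0 : 1 ≤ k := Nat.le_floor (by push_cast; linarith)
  obtain ⟨p, hp, hlt, hle⟩ := Nat.exists_prime_lt_and_le_two_mul (k + 1) (by omega)
  -- an even number above two is not prime, so the upper bound `2 * (k + 1)` is not attained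
  have hne : p ≠ 2 * (k + 1) := by
    rintro rfl
    have := (Nat.Prime.eq_one_or_self_of_dvd hp 2 ⟨_, rfl⟩)
    omega
  refine ⟨p - 1, ?_, ?_, ?_⟩
  · rwa [Nat.sub_add_cancel hp.one_le]
  · have : ((k + 1 : ℕ) : ℝ) ≤ ((p - 1 : ℕ) : ℝ) := Nat.cast_le.2 (by omega)
    push_cast at this
    linarith
  · have : ((p - 1 : ℕ) : ℝ) ≤ ((2 * k : ℕ) : ℝ) := Nat.cast_le.2 (by omega)
    push_cast at this
    linarith

/-- The first moment bound for the random graph: with `S = n ^ (1 / 100)`, `K ≤ n ^ (1 / 5)` and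
`M = n / K` the ratio `s ^ 2 * K / M` is at most `n ^ (-0.57)`, so the `s`-th summand is at most
`n ^ (s - 0.57 * 1.8 * s) ≤ n ^ (-0.026)`. -/
lemma failure_small {n K : ℕ} (hK : 0 < K) (hKn : (K : ℝ) ≤ (n : ℝ) ^ (1 / 5 : ℝ))
    (h2 : 2 ≤ (n : ℝ) ^ (1 / 100 : ℝ)) (h3 : 3 ≤ (n : ℝ) ^ (0.016 : ℝ))
    (he : (n : ℝ) * Real.exp (-(0.035 * K)) < 1 / 2) :
    0 < n / K ∧ K * (n / K) ≤ n ∧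
    ∑ s ∈ Finset.Icc 1 ⌊(n : ℝ) ^ (1 / 100 : ℝ)⌋₊,
        (n : ℝ) ^ s * ((s : ℝ) ^ 2 * K / (n / K : ℕ)) ^ (9 * s / 5 + 1)
      + K * (n / K : ℕ) * Real.exp (0.65 * n / (n / K : ℕ) - 0.75 * K) < 1 := by
  have hn1 : (1 : ℝ) ≤ n := by
    by_contra h
    have h0 : n = 0 := by
      by_contra h0
      exact h (by exact_mod_cast Nat.one_le_iff_ne_zero.2 h0)
    rw [h0, Nat.cast_zero, Real.zero_rpow (by norm_num)] at h2
    norm_num at h2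
  have hn0 : (0 : ℝ) < n := by linarith
  have hK0 : (0 : ℝ) < K := Nat.cast_pos.2 hK
  have hn11 : 11 * (K : ℝ) ≤ n := by
    have h4 : (11 : ℝ) ≤ (n : ℝ) ^ (4 / 5 : ℝ) := by
      have : (n : ℝ) ^ (4 / 5 : ℝ) = ((n : ℝ) ^ (1 / 100 : ℝ)) ^ 80 := by
        rw [← Real.rpow_natCast, ← Real.rpow_mul hn0.le]
        norm_num
      rw [this]
      calc (11 : ℝ) ≤ 2 ^ 80 := by norm_num
        _ ≤ _ := pow_le_pow_left₀ (by norm_num) h2 80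
    calc 11 * (K : ℝ) ≤ (n : ℝ) ^ (4 / 5 : ℝ) * (n : ℝ) ^ (1 / 5 : ℝ) :=
          mul_le_mul h4 hKn hK0.le (by positivity)
      _ = n := by
          rw [← Real.rpow_add hn0]
          norm_num
  have hKM : K * (n / K) ≤ n := Nat.mul_div_le n K
  have hM1 : (n : ℝ) < K * ((n / K : ℕ) + 1) := by
    have := Nat.lt_mul_div_succ n hK
    exact_mod_cast this
  have hKM' : (K : ℝ) * (n / K : ℕ) ≤ n := by exact_mod_cast hKM
  set M := n / K with hM
  have hM0 : (0 : ℝ) < M := by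
    by_contra h
    have : (K : ℝ) * M ≤ 0 := mul_nonpos_of_nonneg_of_nonpos hK0.le (not_lt.1 h)
    linarith
  refine ⟨by exact_mod_cast hM0, hKM, ?_⟩
  have hexp : K * M * Real.exp (0.65 * n / M - 0.75 * K) < 1 / 2 := by
    refine lt_of_le_of_lt (mul_le_mul hKM' (Real.exp_le_exp.2 ?_) (Real.exp_pos _).le hn0.le) he
    have : 0.65 * (n : ℝ) / M ≤ 0.715 * K := by
      rw [div_le_iff₀ hM0]
      nlinarith
    linarith
  have hratio : ∀ s ∈ Finset.Icc 1 ⌊(n : ℝ) ^ (1 / 100 : ℝ)⌋₊,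
      (s : ℝ) ^ 2 * K / M ≤ (n : ℝ) ^ (-0.57 : ℝ) := by
    intro s hs
    have hs' : (s : ℝ) ≤ (n : ℝ) ^ (1 / 100 : ℝ) :=
      (Nat.le_floor_iff (by positivity)).1 (Finset.mem_Icc.1 hs).2
    rw [div_le_iff₀ hM0]
    have h5 : (s : ℝ) ^ 2 * K * (2 * K) ≤ (n : ℝ) ^ (-0.57 : ℝ) * n := by
      calc (s : ℝ) ^ 2 * K * (2 * K)
          ≤ ((n : ℝ) ^ (1 / 100 : ℝ)) ^ 2 * (n : ℝ) ^ (1 / 5 : ℝ)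
            * ((n : ℝ) ^ (1 / 100 : ℝ) * (n : ℝ) ^ (1 / 5 : ℝ)) := by gcongr
        _ = (n : ℝ) ^ (-0.57 : ℝ) * n := by
          rw [← Real.rpow_natCast, ← Real.rpow_mul hn0.le, ← Real.rpow_add hn0,
            ← Real.rpow_add hn0, ← Real.rpow_add hn0]
          nth_rewrite 3 [← Real.rpow_one (n : ℝ)]
          rw [← Real.rpow_add hn0]
          norm_num
    have h6 : (n : ℝ) ≤ 2 * K * M := by linarith
    have h7 : (n : ℝ) ^ (-0.57 : ℝ) * n ≤ (n : ℝ) ^ (-0.57 : ℝ) * (2 * K * M) := by gcongr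
    nlinarith [h5.trans h7]
  have hterm : ∀ s ∈ Finset.Icc 1 ⌊(n : ℝ) ^ (1 / 100 : ℝ)⌋₊,
      (n : ℝ) ^ s * ((s : ℝ) ^ 2 * K / M) ^ (9 * s / 5 + 1) ≤ (n : ℝ) ^ (-0.026 : ℝ) := by
    intro s hs
    have hs1 : (1 : ℝ) ≤ s := by exact_mod_cast (Finset.mem_Icc.1 hs).1
    have hp : 1.8 * (s : ℝ) ≤ ((9 * s / 5 + 1 : ℕ) : ℝ) := by
      have : 9 * s ≤ 5 * (9 * s / 5 + 1) := by omega
      have : (9 : ℝ) * s ≤ 5 * ((9 * s / 5 + 1 : ℕ) : ℝ) := by exact_mod_cast this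
      linarith
    calc (n : ℝ) ^ s * ((s : ℝ) ^ 2 * K / M) ^ (9 * s / 5 + 1)
        ≤ (n : ℝ) ^ s * ((n : ℝ) ^ (-0.57 : ℝ)) ^ (9 * s / 5 + 1) := by
          gcongr
          exact hratio s hs
      _ = (n : ℝ) ^ ((s : ℝ) + -0.57 * ((9 * s / 5 + 1 : ℕ) : ℝ)) := by
          rw [← Real.rpow_natCast, ← Real.rpow_natCast, ← Real.rpow_mul hn0.le,
            ← Real.rpow_add hn0]
      _ ≤ (n : ℝ) ^ (-0.026 : ℝ) := Real.rpow_le_rpow_of_exponent_le hn1 (by linarith)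
  have hsum : ∑ s ∈ Finset.Icc 1 ⌊(n : ℝ) ^ (1 / 100 : ℝ)⌋₊,
      (n : ℝ) ^ s * ((s : ℝ) ^ 2 * K / M) ^ (9 * s / 5 + 1) ≤ 1 / 3 := by
    refine (Finset.sum_le_card_nsmul _ _ _ hterm).trans ?_
    rw [Nat.card_Icc, Nat.add_sub_cancel, nsmul_eq_mul]
    calc (⌊(n : ℝ) ^ (1 / 100 : ℝ)⌋₊ : ℝ) * (n : ℝ) ^ (-0.026 : ℝ)
        ≤ (n : ℝ) ^ (1 / 100 : ℝ) * (n : ℝ) ^ (-0.026 : ℝ) := by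
          gcongr
          exact Nat.floor_le (by positivity)
      _ = ((n : ℝ) ^ (0.016 : ℝ))⁻¹ := by
          rw [← Real.rpow_add hn0, ← Real.rpow_neg hn0.le]
          norm_num
      _ ≤ 1 / 3 := by
          rw [one_div]
          exact inv_anti₀ (by norm_num) h3
  linarith

/-- The level `n ^ (ε / 200)` of the hierarchy is below `n ^ (1 / 100) / 40`. -/
lemma level_le {n : ℕ} {ε : ℝ} (hε : ε < 1) (hn : 1 ≤ n) (h : 42 ≤ (n : ℝ) ^ (1 / 200 : ℝ)) :
    40 * ⌈(n : ℝ) ^ (1 / 200 * ε)⌉₊ ≤ ⌊(n : ℝ) ^ (1 / 100 : ℝ)⌋₊ := by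
  have hn1 : (1 : ℝ) ≤ n := by exact_mod_cast hn
  apply Nat.le_floor
  have h1 : (n : ℝ) ^ (1 / 200 * ε) ≤ (n : ℝ) ^ (1 / 200 : ℝ) :=
    Real.rpow_le_rpow_of_exponent_le hn1 (by linarith)
  have h2 : (⌈(n : ℝ) ^ (1 / 200 * ε)⌉₊ : ℝ) < (n : ℝ) ^ (1 / 200 * ε) + 1 :=
    Nat.ceil_lt_add_one (by positivity)
  have h3 : (n : ℝ) ^ (1 / 100 : ℝ) = (n : ℝ) ^ (1 / 200 : ℝ) * (n : ℝ) ^ (1 / 200 : ℝ) := by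
    rw [← Real.rpow_add (by linarith)]
    norm_num
  push_cast
  rw [h3]
  nlinarith

lemma eventually_le_rpow {a : ℝ} (ha : 0 < a) (B : ℝ) :
    ∀ᶠ n : ℕ in Filter.atTop, B ≤ (n : ℝ) ^ a :=
  ((tendsto_rpow_atTop ha).comp tendsto_natCast_atTop_atTop).eventually_ge_atTop B

lemma eventually_exp_small {a : ℝ} (ha : 0 < a) :
    ∀ᶠ n : ℕ in Filter.atTop, (n : ℝ) * Real.exp (-(0.0175 * (n : ℝ) ^ a)) < 1 / 2 := by
  have h := (tendsto_rpow_mul_exp_neg_mul_atTop_nhds_zero (1 / a) 0.0175 (by norm_num)).comp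
    ((tendsto_rpow_atTop ha).comp tendsto_natCast_atTop_atTop)
  filter_upwards [h.eventually (gt_mem_nhds (show (0 : ℝ) < 1 / 2 by norm_num))] with n hn
  simp only [Function.comp] at hn
  rwa [← Real.rpow_mul (Nat.cast_nonneg n), mul_one_div_cancel ha.ne', Real.rpow_one,
    neg_mul] at hn

/-! ### The instance -/

/-- Splitting `Fin m` into `m / n + 1` blocks of `n` consecutive indices, a bound on the elements of `F`
above each block bounds `F`. -/
lemma card_le_blocks {A : Type*} {m n : ℕ} (F : Finset A) (v : A → Fin m) (B : ℝ)
    (hB : ∀ t : ℕ, (#(F.filter fun e => (v e : ℕ) / n = t) : ℝ) ≤ B) :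
    (#F : ℝ) ≤ ((m / n : ℕ) + 1) * B := by
  have h := Finset.card_eq_sum_card_fiberwise (s := F) (t := Finset.range (m / n + 1))
    (f := fun e => (v e : ℕ) / n) (fun e _ => by
      rw [Finset.mem_coe, Finset.mem_range]
      exact Nat.lt_succ_of_le (Nat.div_le_div_right (v e).2.le))
  rw [h, Nat.cast_sum]
  refine (Finset.sum_le_card_nsmul _ _ B fun t _ => hB t).trans ?_
  rw [Finset.card_range, nsmul_eq_mul]
  push_cast
  rfl

/-- The instance obtained from a good right-hand graph `f` on `n` base left vertices by giving the
left vertex `i` the neighbourhood of the base vertex `i % n`. -/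
lemma exists_instance {n m K r S : ℕ} [hp : Fact (Nat.Prime (K + 1))] (hn : 0 < n)
    (f : Fin n → Fin K → Fin n) (pos : Fin n → Fin K) (hpos : ∀ i a, pos (f i a) = a)
    (hdeg : ∀ j, (#(univ.filter fun i => f i (pos j) = j) : ℝ) ≤ 1.5 * K) (hf : Expands f S)
    (hr : 40 * r ≤ S) (hr1 : 1 ≤ r) :
    ∃ (Eproj : Finset (Fin m × Fin n)) (π : Fin m → Fin n → Fin ((K + 1) ^ 3) → Fin ((K + 1) ^ 3)),
      (∀ i, #(Eproj.filter fun e => e.1 = i) = K) ∧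
      (∀ j, (#(Eproj.filter fun e => e.2 = j) : ℝ) ≤ ((m / n : ℕ) + 1) * (1.5 * K)) ∧
      (∃ y : Finset ((Fin m ⊕ Fin n) × Fin ((K + 1) ^ 3)) → ℝ, ProjFeasible r y ∧
        ∀ e ∈ Eproj, ∑ σL, y {(Sum.inl e.1, σL), (Sum.inr e.2, π e.1 e.2 σL)} = 1) ∧
      (∀ α : (Fin m ⊕ Fin n) → Fin ((K + 1) ^ 3),
        (#(Eproj.filter fun e => π e.1 e.2 (α (Sum.inl e.1)) = α (Sum.inr e.2)) : ℝ) ≤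
          ((m / n : ℕ) + 1) * (4 * n * Real.log (K + 1 : ℕ) + 2 * n)) := by
  classical
  set pt : Fin K → ZMod (K + 1) := fun a => ((a : ℕ) : ZMod (K + 1)) with hpt
  have hpt_inj : Function.Injective pt := by
    intro a a' h
    have := (ZMod.natCast_eq_natCast_iff' _ _ _).1 h
    rw [Nat.mod_eq_of_lt (by omega), Nat.mod_eq_of_lt (by omega)] at this
    exact Fin.ext this
  have hg := dualDist_rs pt hpt_inj
  set g : Fin K → Fin 3 → ZMod (K + 1) := fun a k => pt a ^ (k : ℕ) with hgdef
  obtain ⟨b, hb⟩ := exists_shift f g (by simp)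
  have hcard : Fintype.card (Fin 3 → ZMod (K + 1)) = Fintype.card (Fin ((K + 1) ^ 3)) := by
    simp [ZMod.card]
  -- labels are the triples over `ZMod (K + 1)`; right vertices use the constant triples
  let enc : (Fin 3 → ZMod (K + 1)) ≃ Fin ((K + 1) ^ 3) := Fintype.equivOfCardEq hcard
  have hconst : ∀ s t : ZMod (K + 1), enc (fun _ => s) = enc (fun _ => t) ↔ s = t := fun s t =>
    ⟨fun h => congrFun (enc.injective h) 0, fun h => by rw [h]⟩
  let φ : Fin m → Fin n := fun i => ⟨(i : ℕ) % n, Nat.mod_lt _ hn⟩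
  have hφ : ∀ {i i' : Fin m}, (i : ℕ) / n = (i' : ℕ) / n → φ i = φ i' → i = i' := by
    intro i i' h h'
    have h'' : (i : ℕ) % n = (i' : ℕ) % n := congrArg Fin.val h'
    apply Fin.ext
    rw [← Nat.div_add_mod (i : ℕ) n, ← Nat.div_add_mod (i' : ℕ) n, h, h'']
  let E : Finset (Fin m × Fin n) := univ.filter fun e => f (φ e.1) (pos e.2) = e.2
  have hE : ∀ e : Fin m × Fin n, e ∈ E ↔ f (φ e.1) (pos e.2) = e.2 := fun e => by simp [E]
  refine ⟨E, fun i j σ => enc fun _ => ∑ k, enc.symm σ k * g (pos j) k + b (φ i, pos j),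
    ?_, ?_, ?_, ?_⟩
  · intro i
    have : E.filter (fun e => e.1 = i) = univ.image fun a : Fin K => (i, f (φ i) a) := by
      ext ⟨i', j⟩
      simp only [Finset.mem_filter, hE, Finset.mem_image, Finset.mem_univ, true_and, Prod.mk.injEq]
      constructor
      · rintro ⟨h, rfl⟩
        exact ⟨pos j, rfl, h⟩
      · rintro ⟨a, rfl, rfl⟩
        rw [hpos]
        exact ⟨rfl, rfl⟩
    rw [this, Finset.card_image_of_injective, Finset.card_univ, Fintype.card_fin]
    intro a a' h
    rw [← hpos (φ i) a, ← hpos (φ i) a', (Prod.mk.inj h).2]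
  · intro j
    refine card_le_blocks _ Prod.fst _ fun t => le_trans ?_ (hdeg j)
    rw [Nat.cast_le]
    refine Finset.card_le_card_of_injOn (fun e => φ e.1) ?_ ?_
    · intro e he
      simp only [Finset.coe_filter, Finset.mem_filter, hE, Set.mem_ofPred_eq] at he
      simp only [Finset.coe_filter, Finset.mem_univ, true_and, Set.mem_ofPred_eq]
      rw [← he.1.2]
      exact he.1.1
    · rintro e he e' he' h
      simp only [Finset.coe_filter, Finset.mem_filter, hE, Set.mem_ofPred_eq] at he he'
      exact Prod.ext (hφ (he.2.trans he'.2.symm) h) (he.1.2.trans he'.1.2.symm)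
  · let lab : Fin m ⊕ Fin n → ((Fin n × Fin 3) ⊕ Fin n → ZMod (K + 1)) → Fin ((K + 1) ^ 3) :=
      Sum.elim (fun i x => enc fun k => x (Sum.inl (φ i, k))) (fun j x => enc fun _ => x (Sum.inr j))
    refine ⟨lasY f g b r lab, lasY_feasible hf hg hr b lab (Sum.map φ id) ?_, ?_⟩
    · rintro (i | j) x y
      · simp only [lab, Sum.elim_inl, Sum.map_inl, enc.injective.eq_iff, funext_iff]
        constructor
        · rintro h (⟨i', k⟩ | j') hd
          · obtain rfl : i' = φ i := Sum.inl.inj hd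
            exact h k
          · exact absurd hd Sum.inr_ne_inl
        · exact fun h k => h _ rfl
      · simp only [lab, Sum.elim_inr, Sum.map_inr, hconst]
        constructor
        · rintro h (⟨i', k⟩ | j') hd
          · exact absurd hd Sum.inl_ne_inr
          · obtain rfl : j' = j := Sum.inr.inj hd
            exact h
        · exact fun h => h _ rfl
    · rintro ⟨i, j⟩ he
      rw [hE] at he
      refine lasY_edge hf hg hr hr1 b lab (Sum.inl i) (Sum.inr j) _ (φ i) (pos j) fun x => ?_
      simp only at he
      simp only [lab, Sum.elim_inl, Sum.elim_inr, hconst, Equiv.symm_apply_apply, he]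
  · intro α
    refine card_le_blocks _ Prod.fst _ fun t => ?_
    let z : Fin n → Fin 3 → ZMod (K + 1) := fun i => if h : n * t + i < m then
      enc.symm (α (Sum.inl ⟨n * t + i, h⟩)) else 0
    have hz : ∀ i : Fin m, (i : ℕ) / n = t → z (φ i) = enc.symm (α (Sum.inl i)) := by
      intro i hi
      have h : n * t + (φ i : ℕ) = i := by
        rw [← hi]
        exact Nat.div_add_mod _ _
      simp only [z, h, i.2, dif_pos, Fin.eta]
    refine le_trans ?_ ((hb z fun j => enc.symm (α (Sum.inr j)) 0).trans ?_)
    · rw [Nat.cast_le]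
      refine Finset.card_le_card_of_injOn (fun e => (φ e.1, pos e.2)) ?_ ?_
      · intro e he
        simp only [Finset.coe_filter, Finset.mem_filter, hE, Set.mem_ofPred_eq] at he
        obtain ⟨⟨h1, h2⟩, h3⟩ := he
        simp only [Finset.coe_filter, Finset.mem_univ, true_and, Set.mem_ofPred_eq]
        rw [h1, hz _ h3, ← h2, Equiv.symm_apply_apply]
      · rintro e he e' he' h
        simp only [Finset.coe_filter, Finset.mem_filter, hE, Set.mem_ofPred_eq] at he he'
        obtain ⟨h1, h2⟩ := Prod.mk.inj h
        refine Prod.ext (hφ (he.2.trans he'.2.symm) h1) ?_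
        rw [← he.1.1, ← he'.1.1, h1, h2]
    · simp only [Fintype.card_fin]
      apply le_of_eq
      ring

theorem projection_games_gap_instance :
    ∃ c C : ℝ, 0 < c ∧ 0 < C ∧ ∀ ε : ℝ, 0 < ε → ε < 1 →
      ∃ n₀ : ℕ, ∀ n : ℕ, n₀ ≤ n →
      ∃ (K : ℕ) (Eproj : Finset (Fin ⌈(n : ℝ) ^ ((1 : ℝ) + ε)⌉₊ × Fin n))
        (π : Fin ⌈(n : ℝ) ^ ((1 : ℝ) + ε)⌉₊ → Fin n →
          Fin ((K + 1) ^ 3) → Fin ((K + 1) ^ 3)),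
        -- (4) left degrees are exactly `K`, with `n^{(1-ε)/5}/2 ≤ K ≤ n^{(1-ε)/5}`
        ((n : ℝ) ^ (((1 : ℝ) - ε) / 5) / 2 ≤ (K : ℝ) ∧
          (K : ℝ) ≤ (n : ℝ) ^ (((1 : ℝ) - ε) / 5)) ∧
        (∀ i, (Eproj.filter fun e => e.1 = i).card = K) ∧
        -- (4) right degrees are at most `2 K n^ε`
        (∀ j, ((Eproj.filter fun e => e.2 = j).card : ℝ) ≤ 2 * K * (n : ℝ) ^ ε) ∧
        -- (2) a feasible solution to `SDP_Proj^r`, `r = ⌈n^{cε}⌉`, satisfying all edges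
        (∃ y : Finset ((Fin ⌈(n : ℝ) ^ ((1 : ℝ) + ε)⌉₊ ⊕ Fin n) × Fin ((K + 1) ^ 3)) → ℝ,
          ProjFeasible ⌈(n : ℝ) ^ (c * ε)⌉₊ y ∧
          ∀ e ∈ Eproj,
            ∑ σL, y {(Sum.inl e.1, σL), (Sum.inr e.2, π e.1 e.2 σL)} = 1) ∧
        -- (3) every labelling satisfies at most `C n^{1+ε} ln n / ε` edges
        (∀ α : (Fin ⌈(n : ℝ) ^ ((1 : ℝ) + ε)⌉₊ ⊕ Fin n) → Fin ((K + 1) ^ 3),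
          ((Eproj.filter fun e =>
              π e.1 e.2 (α (Sum.inl e.1)) = α (Sum.inr e.2)).card : ℝ) ≤
            C * (n : ℝ) ^ ((1 : ℝ) + ε) * Real.log n / ε) := by
  refine ⟨1 / 200, 8, by norm_num, by norm_num, fun ε hε0 hε1 => ?_⟩
  have hδ : 0 < (1 - ε) / 5 := by linarith
  obtain ⟨n₀, hn₀⟩ := Filter.eventually_atTop.1
    ((eventually_le_rpow hδ 2).and <| (eventually_le_rpow (show (0 : ℝ) < 1 / 100 by norm_num) 2).and
      <| (eventually_le_rpow (show (0 : ℝ) < 0.016 by norm_num) 3).and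
      <| (eventually_le_rpow (show (0 : ℝ) < 1 / 200 by norm_num) 42).and
      <| (eventually_le_rpow hε0 6).and
      <| (eventually_le_rpow (show (0 : ℝ) < 4 / 5 by norm_num) 2).and
      <| (eventually_exp_small hδ).and (Filter.eventually_ge_atTop 3))
  refine ⟨n₀, fun n hn => ?_⟩
  obtain ⟨hX, h100, h016, h200, hε6, h45, hexp, hn3⟩ := hn₀ n hn
  have hn0 : (0 : ℝ) < n := by
    have : 0 < n := by omega
    exact_mod_cast this
  have hn1 : (1 : ℝ) ≤ n := by
    have : 1 ≤ n := by omega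
    exact_mod_cast this
  obtain ⟨K, hKp, hK1, hK2⟩ := exists_prime_succ hX
  have hK0 : 0 < K := by
    by_contra h
    have : K = 0 := by omega
    subst this
    norm_num at hKp
  have hKn : (K : ℝ) ≤ (n : ℝ) ^ (1 / 5 : ℝ) :=
    hK2.trans (Real.rpow_le_rpow_of_exponent_le hn1 (by linarith))
  have hexpK : (n : ℝ) * Real.exp (-(0.035 * K)) < 1 / 2 := by
    refine lt_of_le_of_lt (mul_le_mul_of_nonneg_left (Real.exp_le_exp.2 ?_) hn0.le) hexp
    linarith
  obtain ⟨hM0, hKM, hb⟩ := failure_small hK0 hKn h100 h016 hexpK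
  obtain ⟨f, pos, hpos, hdeg, hf⟩ := exists_graph hM0 hK0 hKM hb
  have : Fact (Nat.Prime (K + 1)) := ⟨hKp⟩
  obtain ⟨E, π, hE1, hE2, hE3, hE4⟩ := exists_instance (m := ⌈(n : ℝ) ^ ((1 : ℝ) + ε)⌉₊)
    (by omega) f pos hpos hdeg hf (level_le hε1 (by omega) h200)
    (Nat.one_le_ceil_iff.2 (Real.rpow_pos_of_pos hn0 _))
  -- the number of copies of a base vertex
  have hcopies : ((⌈(n : ℝ) ^ ((1 : ℝ) + ε)⌉₊ / n : ℕ) : ℝ) + 1 ≤ 4 / 3 * (n : ℝ) ^ ε := by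
    have h1 : ((⌈(n : ℝ) ^ ((1 : ℝ) + ε)⌉₊ / n : ℕ) : ℝ) ≤ (⌈(n : ℝ) ^ ((1 : ℝ) + ε)⌉₊ : ℝ) / n :=
      Nat.cast_div_le
    have h2 : (⌈(n : ℝ) ^ ((1 : ℝ) + ε)⌉₊ : ℝ) / n ≤ (n : ℝ) ^ ε + 1 := by
      rw [div_le_iff₀ hn0]
      have := Nat.ceil_lt_add_one (show 0 ≤ (n : ℝ) ^ ((1 : ℝ) + ε) by positivity)
      rw [Real.rpow_add hn0, Real.rpow_one] at this ⊢
      nlinarith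
    linarith
  refine ⟨K, E, π, ⟨hK1, hK2⟩, hE1, fun j => (hE2 j).trans ?_, hE3, fun α => (hE4 α).trans ?_⟩
  · calc _ ≤ 4 / 3 * (n : ℝ) ^ ε * (1.5 * K) := by gcongr
      _ = 2 * K * (n : ℝ) ^ ε := by ring
  · have hlog : 1 ≤ Real.log n := by
      rw [Real.le_log_iff_exp_le hn0]
      have : (3 : ℝ) ≤ n := by exact_mod_cast hn3
      linarith [Real.exp_one_lt_d9]
    have hKlog : Real.log (K + 1 : ℕ) ≤ Real.log n := by
      apply Real.log_le_log (by positivity)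
      have hn5 : (n : ℝ) ^ (1 / 5 : ℝ) * (n : ℝ) ^ (4 / 5 : ℝ) = n := by
        rw [← Real.rpow_add hn0]
        norm_num
      have hn5' : 1 ≤ (n : ℝ) ^ (1 / 5 : ℝ) := Real.one_le_rpow hn1 (by norm_num)
      push_cast
      nlinarith
    calc _ ≤ 4 / 3 * (n : ℝ) ^ ε * (4 * n * Real.log n + 2 * (n * Real.log n)) := by
          gcongr
          nlinarith
      _ = 8 * (n : ℝ) ^ ((1 : ℝ) + ε) * Real.log n := by
          rw [Real.rpow_add hn0, Real.rpow_one]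
          ring
      _ ≤ 8 * (n : ℝ) ^ ((1 : ℝ) + ε) * Real.log n / ε := by
          rw [le_div_iff₀ hε0]
          exact mul_le_of_le_one_right (by positivity) hε1.le
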